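/- arXiv:1602.05750 — 6 statements merged into one kernel-verified Lean document; each statement's English description precedes it below -/
import Mathlib

section
/- Let n ∈ ℕ, F ⊆ ℝⁿ a nonempty closed set, Y a normed linear space, f : F → Y an arbitrary function and L : F → L(ℝⁿ,Y) a relative Fréchet derivative of f on F such that L is Baire one on F. Then there exists a function f̄ : ℝⁿ → Y such that: (i) f̄ is Fréchet differentiable at every point of ℝⁿ; (ii) f̄ = f and f̄′ = L on F; (iii) if a ∈ F, L is continuous at a with respect to F and L(a) is a relative strict derivative of f at a with respect to F, then the Fréchet derivative f̄′ is continuous at a (with respect to ℝⁿ); and (iv) f̄ restricted to ℝⁿ \ F is C^∞. -/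
/-!
The proof is a Whitney-type extension. Let `p x` be a nearest point of `F` to `x`. Off `F`, the
extension is a weighted mean, with smooth bumps `ψ c` at Whitney scale as weights
(`exists_whitney_bumps`), of the affine maps `y ↦ f (p c) + A c (y - p c)`. Near a point of `F`, its
error against the expected first-order expansion consists of the expansion error of `f` along `F`,
which is controlled because all the points involved lie within a multiple of `dist x a`, and of the
terms `(A c - L a) (x - p c)`.

With `A c = L (p c)` the latter terms need not be small, as `L` is not continuous. What is needed is
`‖A x - L a‖ * infDist x F = o(dist x a)` at every `a ∈ F`, together with `A x → L a` at continuity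
points `a` of `L`. Such a field exists because `L` is Baire one (`exists_derivative_field`): take
`g k → L` with `g k` continuous, let `k = k x` be the largest index, not too large compared with
`1 / infDist x F`, for which `g k` is nearly constant on a ball of radius `k * infDist x F` around
`p x`, and let `A x` be a value of `L` on that ball, of norm at most `√k`, nearly closest to
`g k (p x)`. Then `k x → ∞` as `x` approaches a point of `F`.

Smoothness off `F` is clear from local finiteness. For continuity of the derivative at `a`, the
derivatives of the weights are `O(1 / infDist x F)`, and they are multiplied by differences of
affine models, which are `o(infDist x F)` by strict differentiability and continuity of `L` at `a`
(`norm_fderiv_weighted_mean_sub_le`).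
-/

open Filter Metric Set Topology

/-- `L` is a Baire one function on `F`. -/
def BaireOneOn {X : Type*} [TopologicalSpace X] {Z : Type*} [TopologicalSpace Z]
    (L : X → Z) (F : Set X) : Prop :=
  ∃ g : ℕ → X → Z, (∀ n, ContinuousOn (g n) F) ∧
    ∀ x ∈ F, Tendsto (fun n => g n x) atTop (𝓝 (L x))

/-- `T` is a relative strict derivative of `f` at `a` with respect to `A`. -/
def RelStrictDerivAt {X : Type*} [NormedAddCommGroup X] [NormedSpace ℝ X]
    {Y : Type*} [NormedAddCommGroup Y] [NormedSpace ℝ Y]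
    (f : X → Y) (A : Set X) (T : X →L[ℝ] Y) (a : X) : Prop :=
  ∀ ε : ℝ, 0 < ε → ∃ δ : ℝ, 0 < δ ∧ ∀ x ∈ A, ∀ y ∈ A,
    ‖x - a‖ < δ → ‖y - a‖ < δ → ‖f y - f x - T (y - x)‖ ≤ ε * ‖y - x‖

/-! ### A Whitney-type family of bumps -/

/-- A maximal subset of `Fᶜ` whose points `c` are `infDist c F / 10` apart; by maximality the balls of
radius `infDist c F / 9` cover `Fᶜ`. -/
theorem exists_separated_net {E : Type*} [MetricSpace E] (F : Set E) :
    ∃ S : Set E, S ⊆ Fᶜ ∧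
      (∀ c ∈ S, ∀ c' ∈ S, c ≠ c' → infDist c F / 10 ≤ dist c c') ∧
      ∀ x ∉ F, ∃ c ∈ S, dist x c ≤ infDist c F / 9 := by
  obtain ⟨S, hS⟩ := zorn_subset
    {S : Set E | S ⊆ Fᶜ ∧ S.Pairwise fun c c' => infDist c F / 10 ≤ dist c c'} (by
      intro C hC hchain
      refine ⟨⋃₀ C, ⟨sUnion_subset fun s hs => (hC hs).1, ?_⟩, fun s hs => subset_sUnion_of_mem hs⟩
      rw [pairwise_sUnion hchain.directedOn]
      exact fun s hs => (hC hs).2)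
  refine ⟨S, hS.prop.1, fun c hc c' hc' h => hS.prop.2 hc hc' h, fun x hx => ?_⟩
  by_contra! hno
  have hxS : x ∉ S := fun h => by
    have := hno x h
    rw [dist_self] at this
    linarith [infDist_nonneg (x := x) (s := F)]
  have key : ∀ c ∈ S, infDist x F / 10 ≤ dist x c ∧ infDist c F / 10 ≤ dist c x := by
    intro c hc
    have h1 := hno c hc
    have h2 := infDist_le_infDist_add_dist (s := F) (x := x) (y := c)
    have h3 := infDist_nonneg (x := c) (s := F)
    rw [dist_comm c x]
    constructor <;> linarith
  have : insert x S ⊆ S := hS.le_of_ge ⟨insert_subset hx hS.prop.1, by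
    intro c hc c' hc' hne
    rcases hc with rfl | hc <;> rcases hc' with rfl | hc'
    · exact absurd rfl hne
    · exact (key c' hc').1
    · exact (key c hc).2
    · exact hS.prop.2 hc hc' hne⟩ (subset_insert x S)
  exact hxS (this (mem_insert x S))

/-- Bounded overlap: after rescaling by `8/100 * infDist x F`, the points of the net in `P` are
`1`-separated in a ball of radius `2`. -/
theorem finite_near {E : Type*} [NormedAddCommGroup E] [NormedSpace ℝ E] [FiniteDimensional ℝ E]
    (F S : Set E) (hS : ∀ c ∈ S, ∀ c' ∈ S, c ≠ c' → infDist c F / 10 ≤ dist c c')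
    (x : E) (hx : 0 < infDist x F) (P : Set E) (hPS : P ⊆ S)
    (hP : ∀ c ∈ P, dist x c ≤ 16/100 * infDist x F ∧ 88/100 * infDist x F ≤ infDist c F) :
    ∃ T : Finset E, (T : Set E) = P ∧ T.card ≤ 5 ^ Module.finrank ℝ E := by
  set d := infDist x F with hd
  set r := 8/100 * d with hr
  have hrpos : 0 < r := by positivity
  have bound : ∀ T : Finset E, (T : Set E) ⊆ P → T.card ≤ 5 ^ Module.finrank ℝ E := by
    intro T hT
    classical
    have hinj : Function.Injective fun c : E => r⁻¹ • (c - x) := by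
      intro a b hab
      have := smul_right_injective E (inv_ne_zero hrpos.ne') hab
      simpa using this
    rw [← Finset.card_image_of_injective T hinj]
    apply Besicovitch.card_le_of_separated
    · simp only [Finset.mem_image, forall_exists_index, and_imp]
      rintro _ c hc rfl
      rw [norm_smul, norm_inv, Real.norm_of_nonneg hrpos.le, inv_mul_le_iff₀ hrpos,
        ← dist_eq_norm, dist_comm]
      linarith [(hP c (hT hc)).1]
    · simp only [Finset.mem_image, forall_exists_index, and_imp]
      rintro _ c hc rfl _ c' hc' rfl hne
      have hne' : c ≠ c' := fun h => hne (by rw [h])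
      rw [← smul_sub, sub_sub_sub_cancel_right, norm_smul, norm_inv,
        Real.norm_of_nonneg hrpos.le, le_inv_mul_iff₀ hrpos, ← dist_eq_norm]
      have := hS c (hPS (hT hc)) c' (hPS (hT hc')) hne'
      linarith [(hP c (hT hc)).2]
  have hfin : P.Finite := by
    by_contra hinf
    obtain ⟨T, hT, hcard⟩ := (show P.Infinite from hinf).exists_subset_card_eq
      (5 ^ Module.finrank ℝ E + 1)
    have := bound T hT
    omega
  exact ⟨hfin.toFinset, by simp, bound _ (by simp)⟩

/-- Whitney-type family of bumps on the complement of `F`: near `x ∉ F` only the at most `N` bumps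
with centre in `T x` are nonzero, their centres `c` satisfy `dist x c ≤ infDist x F` and have
distance to `F` comparable to that of `x`, their derivatives are `O(1 / infDist x F)`, and their sum
is at least `1`. They are not normalised to have sum `1`. -/
theorem exists_whitney_bumps {E : Type*} [NormedAddCommGroup E] [InnerProductSpace ℝ E]
    [FiniteDimensional ℝ E] (F : Set E) (hF : IsClosed F) (hFne : F.Nonempty) :
    ∃ (N : ℕ) (M : ℝ) (ψ : E → E → ℝ) (T : E → Finset E), 0 ≤ M ∧
      (∀ c, ContDiff ℝ (⊤ : ℕ∞) (ψ c)) ∧ (∀ c y, 0 ≤ ψ c y) ∧ (∀ c y, ψ c y ≤ 1) ∧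
      ∀ x ∉ F, (T x).card ≤ N ∧
        (∀ᶠ y in 𝓝 x, ∀ c ∉ T x, ψ c y = 0) ∧
        1 ≤ ∑ c ∈ T x, ψ c x ∧
        ∀ c ∈ T x, c ∉ F ∧ dist x c ≤ infDist x F ∧ infDist c F ≤ 2 * infDist x F ∧
          infDist x F ≤ 2 * infDist c F ∧ ‖fderiv ℝ (ψ c) x‖ ≤ M / infDist x F := by
  classical
  obtain ⟨S, hSF, hsep, hcov⟩ := exists_separated_net F
  have hpos : ∀ x ∉ F, 0 < infDist x F := fun x hx =>
    (hF.notMem_iff_infDist_pos hFne).1 hx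
  let β : ContDiffBump (0 : E) := ⟨1 / 9, 1 / 8, by norm_num, by norm_num⟩
  have hβin : β.rIn = 1 / 9 := rfl
  have hβout : β.rOut = 1 / 8 := rfl
  obtain ⟨K, hK⟩ := (β.contDiff (n := 1)).lipschitzWith_of_hasCompactSupport
    β.hasCompactSupport one_ne_zero
  -- rescaled copies of `β`, equal to `1` on the covering balls of radius `infDist c F / 9`
  let ψ : E → E → ℝ := fun c y => if c ∈ S then β ((infDist c F)⁻¹ • (y - c)) else 0
  have hψS : ∀ c ∈ S, ψ c = fun y => β ((infDist c F)⁻¹ • (y - c)) := fun c hc => by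
    funext y; simp [ψ, hc]
  have hψS' : ∀ c ∉ S, ψ c = fun _ => 0 := fun c hc => by
    funext y; simp [ψ, hc]
  have hnorm : ∀ c ∈ S, ∀ y, ‖(infDist c F)⁻¹ • (y - c)‖ = dist y c / infDist c F := by
    intro c hc y
    rw [norm_smul, norm_inv, Real.norm_of_nonneg infDist_nonneg, dist_eq_norm, div_eq_inv_mul]
  have hzero : ∀ c ∈ S, ∀ y, infDist c F / 8 ≤ dist y c → ψ c y = 0 := by
    intro c hc y hy
    rw [hψS c hc]
    apply β.zero_of_le_dist
    rw [dist_zero_right, hnorm c hc, hβout, le_div_iff₀ (hpos c (hSF hc))]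
    linarith
  -- `T x` collects the bumps met by a small ball around `x`, not only those containing `x`, so
  -- that the sums over `T x` represent the full sums near `x`
  have hT : ∀ x, ∃ T : Finset E, x ∉ F → (T : Set E) =
      {c ∈ S | ∃ y, dist y x ≤ infDist x F / 100 ∧ dist y c ≤ infDist c F / 8} ∧
      T.card ≤ 5 ^ Module.finrank ℝ E := by
    intro x
    by_cases hx : x ∈ F
    · exact ⟨∅, fun h => absurd hx h⟩
    obtain ⟨T, h⟩ := finite_near F S hsep x (hpos x hx)
      {c ∈ S | ∃ y, dist y x ≤ infDist x F / 100 ∧ dist y c ≤ infDist c F / 8}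
      (fun c hc => hc.1) (by
        rintro c ⟨hc, y, hyx, hyc⟩
        have h1 := infDist_le_infDist_add_dist (s := F) (x := x) (y := c)
        have h2 := infDist_le_infDist_add_dist (s := F) (x := c) (y := x)
        have h3 := dist_triangle_left x c y
        rw [dist_comm c x] at h2
        constructor <;> linarith)
    exact ⟨T, fun _ => h⟩
  choose T hT using hT
  have hTmem : ∀ x ∉ F, ∀ c, c ∈ T x ↔
      c ∈ S ∧ ∃ y, dist y x ≤ infDist x F / 100 ∧ dist y c ≤ infDist c F / 8 := by
    intro x hx c
    rw [← Finset.mem_coe, (hT x hx).1]; rfl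
  have hψ0 : ∀ c y, 0 ≤ ψ c y := by
    intro c y
    by_cases hc : c ∈ S
    · rw [hψS c hc]; exact β.nonneg
    · rw [hψS' c hc]
  refine ⟨5 ^ Module.finrank ℝ E, 2 * K, ψ, T, by positivity, ?_, hψ0, ?_, ?_⟩
  · intro c
    by_cases hc : c ∈ S
    · rw [hψS c hc]
      exact β.contDiff.comp (contDiff_const.smul (contDiff_id.sub contDiff_const))
    · rw [hψS' c hc]; exact contDiff_const
  · intro c y
    by_cases hc : c ∈ S
    · rw [hψS c hc]; exact β.le_one
    · rw [hψS' c hc]; exact zero_le_one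
  intro x hx
  refine ⟨(hT x hx).2, ?_, ?_, ?_⟩
  · have hd := hpos x hx
    filter_upwards [closedBall_mem_nhds x (show 0 < infDist x F / 100 by positivity)] with y hy c hc
    by_cases hcS : c ∈ S
    · apply hzero c hcS
      by_contra! hlt
      exact hc ((hTmem x hx c).2 ⟨hcS, y, hy, hlt.le⟩)
    · rw [hψS' c hcS]
  · obtain ⟨c, hc, hxc⟩ := hcov x hx
    have hd := hpos c (hSF hc)
    have hd' := hpos x hx
    have h1 : ψ c x = 1 := by
      rw [hψS c hc]
      apply β.one_of_mem_closedBall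
      rw [mem_closedBall, dist_zero_right, hnorm c hc, hβin, div_le_iff₀ hd]
      linarith
    rw [← h1]
    refine Finset.single_le_sum (f := fun c => ψ c x) (fun c _ => hψ0 c x) ((hTmem x hx c).2 ⟨hc, x, ?_, ?_⟩)
    · rw [dist_self]; positivity
    · linarith
  · intro c hc
    obtain ⟨hcS, y, hyx, hyc⟩ := (hTmem x hx c).1 hc
    have hd := hpos c (hSF hcS)
    have hd' := hpos x hx
    have h1 := infDist_le_infDist_add_dist (s := F) (x := x) (y := c)
    have h2 := infDist_le_infDist_add_dist (s := F) (x := c) (y := x)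
    have h3 := dist_triangle_left x c y
    rw [dist_comm c x] at h2
    have h4 : infDist x F ≤ 2 * infDist c F := by linarith
    refine ⟨hSF hcS, by linarith, by linarith, h4, ?_⟩
    have hlip : LipschitzWith (K * Real.toNNReal (infDist c F)⁻¹) (ψ c) := by
      rw [hψS c hcS]
      refine hK.comp (LipschitzWith.of_dist_le_mul fun u v => ?_)
      rw [dist_eq_norm, ← smul_sub, sub_sub_sub_cancel_right, norm_smul, norm_inv,
        Real.norm_of_nonneg hd.le, Real.coe_toNNReal _ (by positivity), dist_eq_norm]
    refine (norm_fderiv_le_of_lipschitz ℝ hlip).trans ?_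
    rw [NNReal.coe_mul, Real.coe_toNNReal _ (by positivity), ← div_eq_mul_inv,
      div_le_div_iff₀ hd hd']
    nlinarith [K.coe_nonneg]

/-! ### Extending a Baire one map off a closed set -/

theorem exists_almost_minimizer {α : Type*} {C : Set α} (hC : C.Nonempty) (h : α → ℝ)
    (h0 : ∀ c, 0 ≤ h c) {η : ℝ} (hη : 0 < η) : ∃ b ∈ C, ∀ c ∈ C, h b ≤ h c + η := by
  have hbdd : BddBelow (h '' C) := ⟨0, by rintro _ ⟨c, -, rfl⟩; exact h0 c⟩
  obtain ⟨_, ⟨b, hb, rfl⟩, hlt⟩ :=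
    exists_lt_of_csInf_lt (hC.image h) (lt_add_of_pos_right (sInf (h '' C)) hη)
  exact ⟨b, hb, fun c hc => by linarith [csInf_le hbdd (mem_image_of_mem h hc)]⟩

/-- Largest index `k x` at which `g (k x)` oscillates by at most `1 / k x` on the part of `F` within
`k x * infDist x F` of `p x`, among those with `(k x) ^ 2 * infDist x F ≤ 1`. The index `0` is
always admissible: the radius is then `0`, and `1 / 0 = 0`. -/
theorem exists_largest_scale {X Z : Type*} [MetricSpace X] [NormedAddCommGroup Z]
    (F : Set X) (p : X → X) (hd : ∀ x ∉ F, 0 < infDist x F) (g : ℕ → X → Z) :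
    ∃ k : X → ℕ, ∀ x ∉ F,
      ((k x : ℝ) ^ 2 * infDist x F ≤ 1 ∧ ∀ u ∈ F, dist u (p x) ≤ k x * infDist x F →
          ‖g (k x) u - g (k x) (p x)‖ ≤ 1 / k x) ∧
      ∀ m : ℕ, ((m : ℝ) ^ 2 * infDist x F ≤ 1 ∧ ∀ u ∈ F, dist u (p x) ≤ m * infDist x F →
          ‖g m u - g m (p x)‖ ≤ 1 / m) → m ≤ k x := by
  classical
  have : ∀ x, ∃ k : ℕ, x ∉ F →
      ((k : ℝ) ^ 2 * infDist x F ≤ 1 ∧ ∀ u ∈ F, dist u (p x) ≤ k * infDist x F →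
          ‖g k u - g k (p x)‖ ≤ 1 / k) ∧
      ∀ m : ℕ, ((m : ℝ) ^ 2 * infDist x F ≤ 1 ∧ ∀ u ∈ F, dist u (p x) ≤ m * infDist x F →
          ‖g m u - g m (p x)‖ ≤ 1 / m) → m ≤ k := by
    intro x
    by_cases hx : x ∈ F
    · exact ⟨0, fun h => absurd hx h⟩
    set Q : ℕ → Prop := fun m => (m : ℝ) ^ 2 * infDist x F ≤ 1 ∧
      ∀ u ∈ F, dist u (p x) ≤ m * infDist x F → ‖g m u - g m (p x)‖ ≤ 1 / m with hQ
    obtain ⟨b, hb⟩ := exists_nat_ge (1 / infDist x F)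
    have hbound : ∀ m, Q m → m ≤ b := by
      intro m hm
      rw [div_le_iff₀ (hd x hx)] at hb
      have h1 : (m : ℝ) ^ 2 ≤ b := le_of_mul_le_mul_right (hm.1.trans hb) (hd x hx)
      have h2 : m ^ 2 ≤ b := by exact_mod_cast h1
      exact (Nat.le_self_pow two_ne_zero m).trans h2
    have h0 : Q 0 := by
      refine ⟨by simp, fun u _ hu => ?_⟩
      have : u = p x := by
        apply dist_le_zero.1
        simpa using hu
      simp [this]
    exact ⟨Nat.findGreatest Q b, fun _ => ⟨Nat.findGreatest_spec (Nat.zero_le b) h0,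
      fun m hm => Nat.le_findGreatest (hbound m hm) hm⟩⟩
  choose k hk using this
  exact ⟨k, hk⟩

/-- A Baire one map `L` on `F` extends to a map `A` off `F` that approximates `L` at the points of
`F`: with no loss at continuity points of `L`, and in general with a loss of the factor
`infDist x F / dist x a`. Here `A x` is a value `L b` with `b ∈ F` within `k * infDist x F` of `p x`
and `‖L b‖ ≤ √k`, chosen as close to `g k (p x)` as possible, where `k = k x` is the scale of
`exists_largest_scale`. If `a` lies within `k * infDist x F` of `p x`, then `a` competes in this
choice and `A x` is close to `L a`; otherwise `infDist x F / dist x a = O(1 / k)` beats the bound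
`√k`. -/
theorem exists_derivative_field {X Z : Type*} [MetricSpace X] [NormedAddCommGroup Z]
    (F : Set X) (hF : IsClosed F) (hFne : F.Nonempty) (p : X → X) (hpF : ∀ x, p x ∈ F)
    (hp : ∀ x, dist x (p x) = infDist x F) (L : X → Z) (hL : BaireOneOn L F) :
    ∃ A : X → Z, ∀ a ∈ F,
      (∀ ε > 0, ∀ᶠ x in 𝓝[Fᶜ] a, ‖A x - L a‖ * infDist x F ≤ ε * dist x a) ∧
      (ContinuousWithinAt L F a → Tendsto A (𝓝[Fᶜ] a) (𝓝 (L a))) := by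
  classical
  obtain ⟨g, hgc, hgL⟩ := hL
  have hd : ∀ x ∉ F, 0 < infDist x F := fun x hx => (hF.notMem_iff_infDist_pos hFne).1 hx
  obtain ⟨k, hk⟩ := exists_largest_scale F p hd g
  have hda : ∀ a ∈ F, ∀ x, infDist x F ≤ dist x a := fun a ha x => infDist_le_dist_of_mem ha
  have hpa : ∀ a ∈ F, ∀ x, dist (p x) a ≤ 2 * dist x a := fun a ha x => by
    have h1 := dist_triangle_left (p x) a x
    have h2 := hda a ha x
    rw [hp x] at h1
    linarith
  -- Only continuity of `g m` at `a` is used: the ball of radius `m * infDist x F` around `p x`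
  -- lies in the ball of radius `(m + 2) * dist x a` around `a`.
  have hktop : ∀ a ∈ F, Tendsto k (𝓝[Fᶜ] a) atTop := by
    intro a ha
    refine tendsto_atTop.2 fun m => ?_
    rcases Nat.eq_zero_or_pos m with rfl | hm
    · exact Eventually.of_forall fun x => Nat.zero_le _
    have hm' : (0 : ℝ) < m := by exact_mod_cast hm
    obtain ⟨δ, hδ, hgδ⟩ := Metric.continuousWithinAt_iff.1 (hgc m a ha) (1 / (2 * m))
      (by positivity)
    set ρ := min (1 / (m : ℝ) ^ 2) (δ / (m + 3)) with hρ
    have hρpos : 0 < ρ := by positivity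
    filter_upwards [self_mem_nhdsWithin, mem_nhdsWithin_of_mem_nhds (ball_mem_nhds a hρpos)]
      with x hx hxa
    rw [mem_ball] at hxa
    have h1 : dist x a ≤ 1 / (m : ℝ) ^ 2 := hxa.le.trans (min_le_left _ _)
    have h2 : dist x a < δ / (m + 3) := hxa.trans_le (min_le_right _ _)
    rw [lt_div_iff₀ (by positivity)] at h2
    have h0 : 0 ≤ dist x a := dist_nonneg
    refine (hk x hx).2 m ⟨?_, fun u hu hup => ?_⟩
    · rw [le_div_iff₀ (by positivity)] at h1
      nlinarith [hda a ha x, sq_nonneg (m : ℝ)]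
    · have h3 : dist u a < δ := by
        have := dist_triangle u (p x) a
        have h4 := hpa a ha x
        have h5 : (m : ℝ) * infDist x F ≤ m * dist x a := by gcongr; exact hda a ha x
        nlinarith
      have h4 : dist (p x) a < δ := by
        have := hpa a ha x
        nlinarith
      have h5 := hgδ hu h3
      have h6 := hgδ (hpF x) h4
      rw [← dist_eq_norm]
      have h7 := dist_triangle_right (g m u) (g m (p x)) (g m a)
      have h8 : (1 : ℝ) / m = 1 / (2 * m) + 1 / (2 * m) := by field_simp; norm_num
      rw [h8]; linarith
  -- If no point of `F` qualifies, `A x = 0`; this does not happen once `‖L (p x)‖ ≤ √(k x)`.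
  have hA : ∀ x, ∃ T : Z, 0 < k x → ‖T‖ ≤ √(k x) ∧
      (∀ c ∈ F, dist c (p x) ≤ k x * infDist x F → ‖L c‖ ≤ √(k x) →
        ‖T - g (k x) (p x)‖ ≤ ‖L c - g (k x) (p x)‖ + 1 / k x) ∧
      (‖L (p x)‖ ≤ √(k x) → ∃ b ∈ F, dist b (p x) ≤ k x * infDist x F ∧ T = L b) := by
    intro x
    by_cases hC : {c ∈ F | dist c (p x) ≤ k x * infDist x F ∧ ‖L c‖ ≤ √(k x)}.Nonempty
    · by_cases hk0 : 0 < k x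
      · obtain ⟨b, hb, hmin⟩ := exists_almost_minimizer hC (fun c => ‖L c - g (k x) (p x)‖)
          (fun c => norm_nonneg _) (show (0 : ℝ) < 1 / k x by positivity)
        exact ⟨L b, fun _ => ⟨hb.2.2, fun c hc h1 h2 => hmin c ⟨hc, h1, h2⟩,
          fun _ => ⟨b, hb.1, hb.2.1, rfl⟩⟩⟩
      · exact ⟨0, fun h => absurd h hk0⟩
    · refine ⟨0, fun _ => ⟨by simp, fun c hc h1 h2 => absurd ⟨c, hc, h1, h2⟩ hC, fun h => ?_⟩⟩
      refine absurd ⟨p x, hpF x, ?_, h⟩ hC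
      rw [dist_self]
      exact mul_nonneg (Nat.cast_nonneg _) infDist_nonneg
  choose A hA using hA
  refine ⟨A, fun a ha => ⟨fun ε hε => ?_, fun hcont => ?_⟩⟩
  · have hinv : Tendsto (fun m : ℕ => (1 : ℝ) / m) atTop (𝓝 0) := tendsto_one_div_atTop_nhds_zero_nat
    have hnear : Tendsto (fun m : ℕ => 2 * ‖L a - g m a‖ + 3 * (1 / (m : ℝ))) atTop (𝓝 0) := by
      have h1 : Tendsto (fun m : ℕ => ‖L a - g m a‖) atTop (𝓝 0) := by
        simpa using (tendsto_const_nhds (x := L a)).sub (hgL a ha) |>.norm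
      simpa using (h1.const_mul 2).add (hinv.const_mul 3)
    have hsqrt : Tendsto (fun m : ℕ => √(m : ℝ)) atTop atTop :=
      Real.tendsto_sqrt_atTop.comp tendsto_natCast_atTop_atTop
    have hfar : Tendsto (fun m : ℕ => (√(m : ℝ) + ‖L a‖) * (2 / (m : ℝ))) atTop (𝓝 0) := by
      have h1 : Tendsto (fun m : ℕ => 2 * (√(m : ℝ))⁻¹ + 2 * ‖L a‖ * (1 / (m : ℝ))) atTop (𝓝 0) := by
        simpa using (hsqrt.inv_tendsto_atTop.const_mul 2).add (hinv.const_mul (2 * ‖L a‖))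
      refine h1.congr' ?_
      filter_upwards [eventually_gt_atTop 0] with m hm
      have hm' : (0 : ℝ) < m := by exact_mod_cast hm
      have h2 : (√(m : ℝ))⁻¹ = √(m : ℝ) / m := by
        rw [Real.sqrt_div_self]
      rw [h2]; ring
    have hev := ((hnear.eventually_le_const hε).and
      ((hfar.eventually_le_const hε).and ((hsqrt.eventually_ge_atTop ‖L a‖).and
      (eventually_gt_atTop 0))))
    filter_upwards [self_mem_nhdsWithin, (hktop a ha).eventually hev] with x hx ⟨h1, h2, h3, h4⟩
    obtain ⟨hA1, hA2, -⟩ := hA x h4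
    have hk' : (0 : ℝ) < k x := by exact_mod_cast h4
    by_cases hc : dist a (p x) ≤ k x * infDist x F
    · have e1 := hA2 a ha hc h3
      have e2 := (hk x hx).1.2 a ha hc
      have e3 : ‖L a - g (k x) (p x)‖ ≤ ‖L a - g (k x) a‖ + ‖g (k x) a - g (k x) (p x)‖ :=
        norm_sub_le_norm_sub_add_norm_sub _ _ _
      have e4 : ‖A x - L a‖ ≤ ‖A x - g (k x) (p x)‖ + ‖g (k x) (p x) - L a‖ :=
        norm_sub_le_norm_sub_add_norm_sub _ _ _
      rw [norm_sub_rev (g (k x) (p x))] at e4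
      have e5 : ‖A x - L a‖ ≤ ε := by linarith
      exact mul_le_mul e5 (hda a ha x) infDist_nonneg hε.le
    · push Not at hc
      rw [dist_comm] at hc
      have e1 : infDist x F ≤ 2 / k x * dist x a := by
        rw [div_mul_eq_mul_div, le_div_iff₀ hk']
        linarith [hpa a ha x]
      have e2 : ‖A x - L a‖ ≤ √(k x) + ‖L a‖ := (norm_sub_le _ _).trans (by linarith)
      calc ‖A x - L a‖ * infDist x F ≤ (√(k x) + ‖L a‖) * (2 / k x * dist x a) :=
            mul_le_mul e2 e1 infDist_nonneg (by positivity)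
        _ = (√(k x) + ‖L a‖) * (2 / k x) * dist x a := by ring
        _ ≤ ε * dist x a := by gcongr
  · rw [Metric.tendsto_nhds]
    intro ε hε
    obtain ⟨δ, hδ, hLδ⟩ := Metric.continuousWithinAt_iff.1 hcont (min ε 1) (by positivity)
    have hsqrt : Tendsto (fun m : ℕ => √(m : ℝ)) atTop atTop :=
      Real.tendsto_sqrt_atTop.comp tendsto_natCast_atTop_atTop
    have hev := (hsqrt.eventually_ge_atTop (‖L a‖ + 1)).and (eventually_gt_atTop 0)
    -- the search radius `k x * infDist x F` is at most `√(dist x a)`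
    have hsm : ∀ᶠ x in 𝓝[Fᶜ] a, 2 * dist x a + √(dist x a) < δ := by
      have : ContinuousAt (fun x => 2 * dist x a + √(dist x a)) a := by fun_prop
      exact mem_nhdsWithin_of_mem_nhds (this.eventually_lt_const (by simpa using hδ))
    filter_upwards [self_mem_nhdsWithin, (hktop a ha).eventually hev, hsm] with x hx ⟨h1, h2⟩ h3
    have h0 := Real.sqrt_nonneg (dist x a)
    obtain ⟨-, -, hA3⟩ := hA x h2
    have e1 : dist (p x) a < δ := by linarith [hpa a ha x]
    have e2 : ‖L (p x)‖ ≤ √(k x) := by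
      have := (hLδ (hpF x) e1).trans_le (min_le_right _ _)
      rw [dist_eq_norm] at this
      linarith [norm_sub_norm_le (L (p x)) (L a)]
    obtain ⟨b, hb, hbp, hAb⟩ := hA3 e2
    rw [hAb]
    have e3 : k x * infDist x F ≤ √(dist x a) := by
      apply Real.le_sqrt_of_sq_le
      have := (hk x hx).1.1
      nlinarith [hda a ha x, hd x hx]
    refine (hLδ hb ?_).trans_le (min_le_left _ _)
    linarith [dist_triangle b (p x) a, hpa a ha x]

/-! ### Weighted means of affine maps -/

theorem hasFDerivAt_affine {E Y : Type*} [NormedAddCommGroup E] [NormedSpace ℝ E]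
    [NormedAddCommGroup Y] [NormedSpace ℝ Y] (B : E →L[ℝ] Y) (v : Y) (q x : E) :
    HasFDerivAt (fun y => v + B (y - q)) B x := by
  have := (B.hasFDerivAt (x := x - q)).comp x ((hasFDerivAt_id x).sub_const q)
  exact this.const_add v

/-- A weighted mean of points of a ball stays in that ball. -/
theorem norm_weighted_mean_sub_le {ι Y : Type*} [NormedAddCommGroup Y] [NormedSpace ℝ Y]
    (T : Finset ι) (w : ι → ℝ) (z : ι → Y) (v : Y) (r : ℝ) (hw : ∀ c ∈ T, 0 ≤ w c)
    (hs : 1 ≤ ∑ c ∈ T, w c) (hz : ∀ c ∈ T, ‖z c - v‖ ≤ r) :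
    ‖(∑ c ∈ T, w c)⁻¹ • ∑ c ∈ T, w c • z c - v‖ ≤ r := by
  have := (convex_closedBall v r).centerMass_mem hw (zero_lt_one.trans_le hs)
    (fun c hc => mem_closedBall_iff_norm.2 (hz c hc))
  exact mem_closedBall_iff_norm.1 this

/-- If the functions `h c` all agree at `x`, up to order one, with an affine map of value `v` and
linear part `B` (value error `ε * d`, derivative error `ε`), and the weights have derivatives of
size `M / d`, then the derivative of the weighted mean of the `h c` is `O(ε)`-close to `B`. The
affine map is subtracted first, so that the large derivatives of the weights only meet the small
errors `h c x - v`. -/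
theorem norm_fderiv_weighted_mean_sub_le {ι E Y : Type*} [NormedAddCommGroup E] [NormedSpace ℝ E]
    [NormedAddCommGroup Y] [NormedSpace ℝ Y] (T : Finset ι) (ψ : ι → E → ℝ) (h : ι → E → Y)
    (A : ι → E →L[ℝ] Y) (B : E →L[ℝ] Y) (v : Y) (x : E) {N : ℕ} {M d ε : ℝ} (hM : 0 ≤ M)
    (hd : 0 < d) (hε : 0 ≤ ε) (hcard : T.card ≤ N) (hψ : ∀ c, DifferentiableAt ℝ (ψ c) x)
    (hψ0 : ∀ c, 0 ≤ ψ c x) (hψ1 : ∀ c, ψ c x ≤ 1) (hs : 1 ≤ ∑ c ∈ T, ψ c x)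
    (hD : ∀ c ∈ T, ‖fderiv ℝ (ψ c) x‖ ≤ M / d) (hh : ∀ c, HasFDerivAt (h c) (A c) x)
    (hv : ∀ c ∈ T, ‖h c x - v‖ ≤ ε * d) (hA : ∀ c ∈ T, ‖A c - B‖ ≤ ε) :
    ‖fderiv ℝ (fun y => (∑ c ∈ T, ψ c y)⁻¹ • ∑ c ∈ T, ψ c y • h c y) x - B‖
      ≤ (N + N * M + N * N * M) * ε := by
  set s := ∑ c ∈ T, ψ c x with hsdef
  have hspos : 0 < s := zero_lt_one.trans_le hs
  have hN : (T.card : ℝ) ≤ N := by exact_mod_cast hcard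
  have hsum : HasFDerivAt (fun y => ∑ c ∈ T, ψ c y) (∑ c ∈ T, fderiv ℝ (ψ c) x) x :=
    HasFDerivAt.fun_sum fun c _ => (hψ c).hasFDerivAt
  have hinv : HasFDerivAt (fun y => (∑ c ∈ T, ψ c y)⁻¹)
      ((-(s ^ 2)⁻¹) • ∑ c ∈ T, fderiv ℝ (ψ c) x) x :=
    (hasDerivAt_inv hspos.ne').comp_hasFDerivAt x hsum
  have hℓ : HasFDerivAt (fun y => v + B (y - x)) B x := hasFDerivAt_affine B v x x
  have hH : ∀ c, HasFDerivAt (fun y => h c y - (v + B (y - x))) (A c - B) x := fun c =>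
    (hh c).sub hℓ
  have hnum : HasFDerivAt (fun y => ∑ c ∈ T, ψ c y • (h c y - (v + B (y - x))))
      (∑ c ∈ T, (ψ c x • (A c - B) + (fderiv ℝ (ψ c) x).smulRight (h c x - (v + B (x - x))))) x :=
    HasFDerivAt.fun_sum fun c _ => (hψ c).hasFDerivAt.smul (hH c)
  have hprod := (hinv.smul hnum).add hℓ
  have hne : ∀ᶠ y in 𝓝 x, (∑ c ∈ T, ψ c y) ≠ 0 :=
    hsum.continuousAt.eventually_ne hspos.ne'
  have hfd := (hprod.congr_of_eventuallyEq (f₁ := fun y =>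
    (∑ c ∈ T, ψ c y)⁻¹ • ∑ c ∈ T, ψ c y • h c y) (by
      filter_upwards [hne] with y hy
      simp only [Pi.add_apply, Pi.smul_apply', smul_sub, Finset.sum_sub_distrib, ← Finset.sum_smul]
      rw [inv_smul_smul₀ hy]
      abel)).fderiv
  rw [hfd, add_sub_cancel_right]
  have hx0 : v + B (x - x) = v := by simp
  rw [hx0]
  have b1 : ‖∑ c ∈ T, (ψ c x • (A c - B) + (fderiv ℝ (ψ c) x).smulRight (h c x - v))‖
      ≤ N * (ε + M * ε) := by
    refine (norm_sum_le_of_le T (n := fun _ => ε + M * ε) fun c hc => ?_).trans ?_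
    · refine (norm_add_le _ _).trans (add_le_add ?_ ?_)
      · rw [norm_smul, Real.norm_of_nonneg (hψ0 c)]
        calc ψ c x * ‖A c - B‖ ≤ 1 * ε := mul_le_mul (hψ1 c) (hA c hc) (norm_nonneg _) zero_le_one
          _ = ε := one_mul ε
      · rw [ContinuousLinearMap.norm_smulRight_apply]
        calc ‖fderiv ℝ (ψ c) x‖ * ‖h c x - v‖ ≤ M / d * (ε * d) :=
              mul_le_mul (hD c hc) (hv c hc) (norm_nonneg _) (by positivity)
          _ = M * ε := by field_simp
    · rw [Finset.sum_const, nsmul_eq_mul]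
      gcongr
  have b2 : ‖∑ c ∈ T, ψ c x • (h c x - v)‖ ≤ N * (ε * d) := by
    refine (norm_sum_le_of_le T (n := fun _ => ε * d) fun c hc => ?_).trans ?_
    · rw [norm_smul, Real.norm_of_nonneg (hψ0 c)]
      calc ψ c x * ‖h c x - v‖ ≤ 1 * (ε * d) :=
            mul_le_mul (hψ1 c) (hv c hc) (norm_nonneg _) zero_le_one
        _ = ε * d := one_mul _
    · rw [Finset.sum_const, nsmul_eq_mul]
      gcongr
  have b3 : ‖∑ c ∈ T, fderiv ℝ (ψ c) x‖ ≤ N * (M / d) := by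
    refine (norm_sum_le_of_le T hD).trans ?_
    rw [Finset.sum_const, nsmul_eq_mul]
    gcongr
  have hs1 : s⁻¹ ≤ 1 := inv_le_one_of_one_le₀ hs
  have hs2 : (s ^ 2)⁻¹ ≤ 1 := inv_le_one_of_one_le₀ (one_le_pow₀ hs)
  refine (norm_add_le _ _).trans ?_
  rw [ContinuousLinearMap.norm_smulRight_apply, norm_smul, norm_smul, norm_neg,
    Real.norm_of_nonneg (inv_nonneg.2 hspos.le), Real.norm_of_nonneg (by positivity)]
  have c1 := mul_le_mul hs1 b1 (norm_nonneg _) zero_le_one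
  have c2 := mul_le_mul (mul_le_mul hs2 b3 (norm_nonneg _) zero_le_one) b2 (norm_nonneg _)
    (by positivity)
  refine (add_le_add c1 c2).trans (le_of_eq ?_)
  field_simp

/-! ### The extension -/

/-- The extension theorem over an arbitrary finite-dimensional inner product space. At `c ∉ F`, the
extension is modelled on the affine map through `(p c, f (p c))` with linear part `A c`, where `p c`
is a nearest point of `F` and `A` is the field given by `exists_derivative_field`. -/
theorem exists_differentiable_extension {E Y : Type*} [NormedAddCommGroup E]
    [InnerProductSpace ℝ E] [FiniteDimensional ℝ E] [NormedAddCommGroup Y] [NormedSpace ℝ Y]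
    (F : Set E) (hF : IsClosed F) (hFne : F.Nonempty) (f : E → Y) (L : E → E →L[ℝ] Y)
    (hLder : ∀ a ∈ F, HasFDerivWithinAt f (L a) F a) (hL : BaireOneOn L F) :
    ∃ fbar : E → Y, (∀ a ∈ F, HasFDerivAt fbar (L a) a) ∧ (∀ x ∈ F, fbar x = f x) ∧
      (∀ a ∈ F, ContinuousWithinAt L F a → RelStrictDerivAt f F (L a) a →
        ContinuousAt (fderiv ℝ fbar) a) ∧
      ∀ x ∉ F, ContDiffAt ℝ (⊤ : ℕ∞) fbar x := by
  classical
  have : ProperSpace E := FiniteDimensional.proper ℝ E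
  choose p hpF hp using fun x => hF.exists_infDist_eq_dist hFne x
  obtain ⟨A, hA⟩ := exists_derivative_field F hF hFne p hpF (fun x => (hp x).symm) L hL
  obtain ⟨N, M, ψ, T, hM, hψ, hψ0, hψ1, hT⟩ := exists_whitney_bumps F hF hFne
  have hpos : ∀ x ∉ F, 0 < infDist x F := fun x hx => (hF.notMem_iff_infDist_pos hFne).1 hx
  let h : E → E → Y := fun c y => f (p c) + A c (y - p c)
  have hh : ∀ c y, HasFDerivAt (h c) (A c) y := fun c y =>
    hasFDerivAt_affine (A c) (f (p c)) (p c) y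
  let G : E → E → Y := fun x y => (∑ c ∈ T x, ψ c y)⁻¹ • ∑ c ∈ T x, ψ c y • h c y
  let fbar : E → Y := fun y =>
    if y ∈ F then f y else (∑ᶠ c, ψ c y)⁻¹ • ∑ᶠ c, ψ c y • h c y
  have hfF : ∀ x ∈ F, fbar x = f x := fun x hx => if_pos hx
  have hloc : ∀ x ∉ F, fbar =ᶠ[𝓝 x] G x := by
    intro x hx
    filter_upwards [(hT x hx).2.1, hF.isOpen_compl.mem_nhds hx] with y hy hyF
    have e1 : ∑ᶠ c, ψ c y = ∑ c ∈ T x, ψ c y := by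
      apply finsum_eq_sum_of_support_subset
      intro c hc
      by_contra hcT
      exact hc (hy c hcT)
    have e2 : ∑ᶠ c, ψ c y • h c y = ∑ c ∈ T x, ψ c y • h c y := by
      apply finsum_eq_sum_of_support_subset
      intro c hc
      by_contra hcT
      exact hc (by simp [hy c hcT])
    simp only [fbar, G, if_neg hyF, e1, e2]
  -- locations of the nodes that matter near `x`
  have hgeo : ∀ a ∈ F, ∀ x ∉ F, ∀ c ∈ T x, c ∉ F ∧ dist c a ≤ 2 * dist x a ∧
      dist (p c) x ≤ 3 * infDist x F ∧ dist (p c) a ≤ 4 * dist x a ∧ infDist x F ≤ dist x a ∧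
      infDist x F ≤ 2 * infDist c F := by
    intro a ha x hx c hc
    obtain ⟨h1, h2, h3, h4, -⟩ := (hT x hx).2.2.2 c hc
    have h5 := infDist_le_dist_of_mem ha (x := x)
    have h6 := dist_triangle_left c a x
    have h7 := dist_triangle_left (p c) x c
    have h8 := dist_triangle (p c) x a
    rw [← hp c, dist_comm c x] at h7
    exact ⟨h1, by linarith, by linarith, by linarith, h5, h4⟩
  have hdiff : ∀ a ∈ F, HasFDerivAt fbar (L a) a := by
    intro a ha
    have hin : HasFDerivWithinAt fbar (L a) F a := (hLder a ha).congr hfF (hfF a ha)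
    have hout : HasFDerivWithinAt fbar (L a) Fᶜ a := by
      refine HasFDerivWithinAt.of_isLittleO (Asymptotics.isLittleO_iff.2 fun ε hε => ?_)
      have ev1 := Asymptotics.isLittleO_iff.1 (hLder a ha).isLittleO
        (show 0 < ε / 16 by positivity)
      have ev2 := (hA a ha).1 (ε / 16) (by positivity)
      obtain ⟨δ₁, hδ₁, hf₁⟩ := Metric.mem_nhdsWithin_iff.1 ev1
      obtain ⟨δ₂, hδ₂, hA₂⟩ := Metric.mem_nhdsWithin_iff.1 ev2
      have hδ : 0 < min (δ₁ / 4) (δ₂ / 2) := by positivity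
      filter_upwards [self_mem_nhdsWithin, mem_nhdsWithin_of_mem_nhds (ball_mem_nhds a hδ)]
        with x hx hxa
      have hx₁ : dist x a < δ₁ / 4 := (mem_ball.1 hxa).trans_le (min_le_left _ _)
      have hx₂ : dist x a < δ₂ / 2 := (mem_ball.1 hxa).trans_le (min_le_right _ _)
      rw [(hloc x hx).eq_of_nhds, hfF a ha, sub_sub]
      refine norm_weighted_mean_sub_le _ _ _ _ _ (fun c _ => hψ0 c x) (hT x hx).2.2.1
        fun c hc => ?_
      obtain ⟨g1, g2, g3, g4, g5, g6⟩ := hgeo a ha x hx c hc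
      have i1 : ‖f (p c) - f a - L a (p c - a)‖ ≤ ε / 16 * ‖p c - a‖ :=
        hf₁ ⟨mem_ball.2 (by linarith), hpF c⟩
      have i2 : ‖A c - L a‖ * infDist c F ≤ ε / 16 * dist c a :=
        hA₂ ⟨mem_ball.2 (by linarith), g1⟩
      have i3 : ‖(A c - L a) (x - p c)‖ ≤ ‖A c - L a‖ * (3 * infDist x F) := by
        refine ((A c - L a).le_opNorm _).trans ?_
        gcongr
        rwa [← dist_eq_norm, dist_comm]
      have i4 : ‖A c - L a‖ * infDist x F ≤ ‖A c - L a‖ * (2 * infDist c F) := by gcongr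
      have i5 : ε / 16 * ‖p c - a‖ ≤ ε / 16 * (4 * dist x a) := by
        rw [← dist_eq_norm]; gcongr
      have i6 : ε / 16 * dist c a ≤ ε / 16 * (2 * dist x a) := by gcongr
      -- the first term is small since `L a` is the derivative of `f` along `F`, the second one
      -- by the choice of the field `A`
      have i7 : h c x - (f a + L a (x - a))
          = (f (p c) - f a - L a (p c - a)) + (A c - L a) (x - p c) := by
        simp only [h, map_sub, sub_apply]
        abel
      rw [i7, ← dist_eq_norm x a]
      refine (norm_add_le _ _).trans ?_
      linarith
    have := hin.union hout
    rwa [union_compl_self, hasFDerivWithinAt_univ] at this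
  refine ⟨fbar, hdiff, hfF, ?_, ?_⟩
  · intro a ha hcont hstrict
    -- Near `a`, all the affine models used around `x ∉ F` are compared with the one of value
    -- `f (p x)` at `p x` and linear part `L a`; strict differentiability controls the values.
    have hval : fderiv ℝ fbar a = L a := (hdiff a ha).fderiv
    rw [← continuousWithinAt_univ, ← union_compl_self F]
    refine ContinuousWithinAt.union (hcont.congr (fun x hx => (hdiff x hx).fderiv) hval) ?_
    rw [ContinuousWithinAt, hval, Metric.tendsto_nhds]
    intro ε₀ hε₀
    set C : ℝ := N + N * M + N * N * M with hC
    have hC0 : 0 ≤ C := by positivity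
    set ε := ε₀ / (2 * (C + 1)) with hεdef
    have hε : 0 < ε := by positivity
    have hCε : C * ε < ε₀ := by
      rw [hεdef, mul_div_assoc', div_lt_iff₀ (by positivity)]
      nlinarith
    obtain ⟨δ₁, hδ₁, hf₁⟩ := hstrict (ε / 7) (by positivity)
    have ev2 := Metric.tendsto_nhds.1 ((hA a ha).2 hcont) (ε / 7) (by positivity)
    obtain ⟨δ₂, hδ₂, hA₂⟩ := Metric.mem_nhdsWithin_iff.1 ev2
    have hδ : 0 < min (δ₁ / 4) (δ₂ / 2) := by positivity
    filter_upwards [self_mem_nhdsWithin, mem_nhdsWithin_of_mem_nhds (ball_mem_nhds a hδ)]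
      with x hx hxa
    have hx₁ : dist x a < δ₁ / 4 := (mem_ball.1 hxa).trans_le (min_le_left _ _)
    have hx₂ : dist x a < δ₂ / 2 := (mem_ball.1 hxa).trans_le (min_le_right _ _)
    rw [(hloc x hx).fderiv_eq, dist_eq_norm]
    have hAc : ∀ c ∈ T x, ‖A c - L a‖ ≤ ε / 7 := by
      intro c hc
      obtain ⟨g1, g2, -⟩ := hgeo a ha x hx c hc
      rw [← dist_eq_norm]
      exact le_of_lt (hA₂ ⟨mem_ball.2 (by linarith), g1⟩)
    refine (norm_fderiv_weighted_mean_sub_le (T x) ψ h A (L a) (f (p x) + L a (x - p x)) x hM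
      (hpos x hx) hε.le (hT x hx).1 (fun c => (hψ c).differentiable (by simp) x)
      (fun c => hψ0 c x) (fun c => hψ1 c x) (hT x hx).2.2.1
      (fun c hc => ((hT x hx).2.2.2 c hc).2.2.2.2) (fun c => hh c x) ?_
      (fun c hc => (hAc c hc).trans (by linarith))).trans_lt hCε
    intro c hc
    obtain ⟨g1, g2, g3, g4, g5, g6⟩ := hgeo a ha x hx c hc
    have hpx := hp x
    have j1 := dist_triangle_left (p x) a x
    have j2 := dist_triangle (p c) x (p x)
    have i1 : ‖f (p c) - f (p x) - L a (p c - p x)‖ ≤ ε / 7 * ‖p c - p x‖ :=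
      hf₁ (p x) (hpF x) (p c) (hpF c) (by rw [← dist_eq_norm]; linarith)
        (by rw [← dist_eq_norm]; linarith)
    have i2 : ε / 7 * ‖p c - p x‖ ≤ ε / 7 * (4 * infDist x F) := by
      rw [← dist_eq_norm]; gcongr; linarith
    have i3 : ‖(A c - L a) (x - p c)‖ ≤ ε / 7 * (3 * infDist x F) := by
      refine ((A c - L a).le_opNorm _).trans ?_
      gcongr
      · exact hAc c hc
      · rwa [← dist_eq_norm, dist_comm]
    have i4 : h c x - (f (p x) + L a (x - p x))
        = (f (p c) - f (p x) - L a (p c - p x)) + (A c - L a) (x - p c) := by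
      simp only [h, map_sub, sub_apply]
      abel
    rw [i4]
    refine (norm_add_le _ _).trans ?_
    linarith
  · intro x hx
    refine ContDiffAt.congr_of_eventuallyEq ?_ (hloc x hx)
    have hs : (∑ c ∈ T x, ψ c x) ≠ 0 := (zero_lt_one.trans_le (hT x hx).2.2.1).ne'
    refine ContDiffAt.smul (ContDiffAt.inv ?_ hs) ?_
    · exact ContDiffAt.sum fun c _ => (hψ c).contDiffAt
    · refine ContDiffAt.sum fun c _ => (hψ c).contDiffAt.smul ?_
      exact contDiffAt_const.add
        ((A c).contDiff.contDiffAt.comp x (contDiffAt_id.sub contDiffAt_const))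

/-- Vector-valued version of the Koc–Zajíček extension theorem: a function on a nonempty
closed set `F ⊆ ℝⁿ` with a Baire one relative Fréchet derivative `L` extends to an
everywhere Fréchet differentiable function on `ℝⁿ` with derivative `L` on `F`,
`C^∞` outside `F`, whose derivative is continuous at each point of `F` where `L` is
continuous and is a relative strict derivative. -/
theorem extension_differentiable_everywhere_finite_dim
    (n : ℕ) {Y : Type*} [NormedAddCommGroup Y] [NormedSpace ℝ Y]
    (F : Set (EuclideanSpace ℝ (Fin n))) (hF : IsClosed F) (hFne : F.Nonempty)
    (f : EuclideanSpace ℝ (Fin n) → Y)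
    (L : EuclideanSpace ℝ (Fin n) → (EuclideanSpace ℝ (Fin n) →L[ℝ] Y))
    (hLder : ∀ a ∈ F, HasFDerivWithinAt f (L a) F a)
    (hL : BaireOneOn L F) :
    ∃ fbar : EuclideanSpace ℝ (Fin n) → Y,
      -- (i)
      Differentiable ℝ fbar ∧
      -- (ii)
      (∀ x ∈ F, fbar x = f x) ∧ (∀ a ∈ F, fderiv ℝ fbar a = L a) ∧
      -- (iii)
      (∀ a ∈ F, ContinuousWithinAt L F a → RelStrictDerivAt f F (L a) a →
        ContinuousAt (fderiv ℝ fbar) a) ∧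
      -- (iv)
      ContDiffOn ℝ (⊤ : ℕ∞) fbar Fᶜ := by
  obtain ⟨fbar, h1, h2, h3, h4⟩ := exists_differentiable_extension F hF hFne f L hLder hL
  refine ⟨fbar, fun x => ?_, h2, fun a ha => (h1 a ha).fderiv, h3,
    fun x hx => (h4 x hx).contDiffWithinAt⟩
  by_cases hx : x ∈ F
  · exact (h1 x hx).differentiableAt
  · exact (h4 x hx).differentiableAt (by simp)
end

section
/- Let n ∈ ℕ, F ⊆ ℝⁿ a nonempty closed set, Y a normed linear space, f : F → Y a function and L : F → L(ℝⁿ,Y) a map that is continuous on F and such that for every a ∈ F, L(a) is a relative strict derivative of f at a with respect to F. Then there exists a continuously differentiable function f̄ : ℝⁿ → Y (i.e. f̄ is Fréchet differentiable everywhere on ℝⁿ and f̄′ is continuous on ℝⁿ) such that f̄ = f on F and f̄′(a) = L(a) for every a ∈ F. -/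
/-!
The extension is Whitney's. Let `d = infDist · F`. On `Fᶜ` there is a smooth partition of unity
`φ p`, indexed by a net of points `p ∉ F`, with uniformly bounded overlap, with `d p` comparable
to `d x` and `dist x p ≤ d x / 6` whenever `φ p` is nonzero near `x`, and with derivatives bounded by `K / d`
(`exists_whitney_partition`). For every `p` choose a nearest point `π p ∈ F`, and put
`h = f` on `F` and `h x = ∑ φ p x • P (π p) x` off `F`, where `P b x = f b + L b (x - b)`.
All sums are locally finite, so completeness of `Y` plays no role.

Strict differentiability at `a ∈ F` together with continuity of `L` gives, for `b, c ∈ F` near `a`,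
`‖P c x - P b x‖ ≤ ε * (dist c b + dist x c + dist x b)`. Taking `b = a` yields
`h x = P a x + o(dist x a)`, so `h` has derivative `L a` at `a`. Taking `b = π x`, the difference
`P (π p) x - P b x` is at most `5 * ε * d x`; this factor `d x` cancels the `1 / d x` in the bound
for the derivative of `φ p`, so `fderiv ℝ h x` is close to `L (π x)`, hence to `L a`, and `fderiv ℝ h` is continuous at `a`.
-/

open Filter Metric Set Topology

/-- A maximal subset of the complement of `F` whose points are separated proportionally to their
distance to `F`. Maximality forces the balls `closedBall p (infDist p F / 9)`, `p ∈ S`, to cover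
`Fᶜ`. -/
theorem exists_whitney_net {E : Type*} [NormedAddCommGroup E] (F : Set E) (hF : IsClosed F) (hne : F.Nonempty) :
    ∃ S : Set E, S ⊆ Fᶜ ∧ (S.Pairwise fun p q => infDist p F / 10 ≤ dist p q) ∧
      ∀ x ∉ F, ∃ p ∈ S, dist x p ≤ infDist p F / 9 := by
  obtain ⟨S, hS⟩ := zorn_subset
    {S : Set E | S ⊆ Fᶜ ∧ S.Pairwise fun p q => infDist p F / 10 ≤ dist p q} (by
      intro c hc hchain
      refine ⟨⋃₀ c, ⟨sUnion_subset fun s hs => (hc hs).1, ?_⟩, fun s hs => subset_sUnion_of_mem hs⟩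
      exact (pairwise_sUnion hchain.directedOn).2 fun s hs => (hc hs).2)
  refine ⟨S, hS.prop.1, hS.prop.2, fun x hx => ?_⟩
  have hdx : 0 < infDist x F := (hF.notMem_iff_infDist_pos hne).1 hx
  by_contra! hcon
  have hxS : x ∉ S := fun h => by
    have := hcon x h
    rw [dist_self] at this
    linarith
  -- the net together with `x` would still be separated
  have hins : insert x S ∈
      {S : Set E | S ⊆ Fᶜ ∧ S.Pairwise fun p q => infDist p F / 10 ≤ dist p q} := by
    refine ⟨insert_subset hx hS.prop.1, ?_⟩
    rw [pairwise_insert_of_notMem hxS]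
    refine ⟨hS.prop.2, fun p hp => ?_⟩
    have h1 := hcon p hp
    have h2 : infDist x F ≤ infDist p F + dist x p := infDist_le_infDist_add_dist
    have h3 : 0 ≤ infDist p F := infDist_nonneg
    refine ⟨by linarith, by rw [dist_comm p x]; linarith⟩
  exact hxS (hS.le_of_ge hins (subset_insert x S) (mem_insert x S))

/-- Bounded overlap: the net points at distance at most `4/25 * infDist x F` from `x` are
`2/25 * infDist x F`-separated, so after rescaling they are counted by
`Besicovitch.card_le_of_separated`. -/
theorem whitney_net_finite {E : Type*} [NormedAddCommGroup E] [NormedSpace ℝ E] [FiniteDimensional ℝ E]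
    {F S : Set E}
    (hS : S.Pairwise fun p q => infDist p F / 10 ≤ dist p q) {x : E} (hx : 0 < infDist x F) :
    ∃ t : Finset S, t.card ≤ 5 ^ Module.finrank ℝ E ∧
      ∀ p : S, p ∈ t ↔ dist x p ≤ (4 / 25) * infDist x F := by
  classical
  set r := infDist x F with hr
  have key : ∀ t : Finset S, (∀ p ∈ t, dist x p ≤ (4 / 25) * r) →
      t.card ≤ 5 ^ Module.finrank ℝ E := by
    intro t ht
    have hinj : Function.Injective fun p : S => ((2 / 25) * r)⁻¹ • ((p : E) - x) := by
      intro p q hpq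
      have h := smul_right_injective E (by positivity : ((2 / 25) * r)⁻¹ ≠ 0) hpq
      exact Subtype.ext (sub_left_injective h)
    rw [← Finset.card_image_of_injective t hinj]
    refine Besicovitch.card_le_of_separated _ ?_ ?_
    · intro c hc
      obtain ⟨p, hp, rfl⟩ := Finset.mem_image.1 hc
      have h := ht p hp
      rw [dist_comm, dist_eq_norm] at h
      simp only [norm_smul, norm_inv, Real.norm_eq_abs]
      rw [abs_of_pos (by positivity), inv_mul_le_iff₀ (by positivity)]
      linarith
    · intro c hc d hd hcd
      obtain ⟨p, hp, rfl⟩ := Finset.mem_image.1 hc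
      obtain ⟨q, hq, rfl⟩ := Finset.mem_image.1 hd
      have hpq : (p : E) ≠ q := fun h => hcd (by simp only [h])
      have h1 : infDist (p : E) F / 10 ≤ dist (p : E) q := hS p.2 q.2 hpq
      have h2 : r ≤ infDist (p : E) F + dist x p := infDist_le_infDist_add_dist
      have h3 := ht p hp
      rw [dist_eq_norm] at h1
      simp only [← smul_sub, sub_sub_sub_cancel_right, norm_smul, norm_inv, Real.norm_eq_abs]
      rw [abs_of_pos (by positivity), le_inv_mul_iff₀ (by positivity)]
      linarith
  have hfin : {p : S | dist x p ≤ (4 / 25) * r}.Finite := by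
    by_contra hinf
    obtain ⟨t, ht, hcard⟩ := Set.Infinite.exists_subset_card_eq hinf (5 ^ Module.finrank ℝ E + 1)
    have := key t fun p hp => ht hp
    omega
  exact ⟨hfin.toFinset, key _ fun p hp => by simpa using hp, fun p => by simp⟩

/-- A Whitney partition of unity on `Fᶜ`: near each `x ∉ F` only at most `K` functions are
nonzero, they are indexed by points `p` at distance at most `infDist x F / 6` from `x`, and their
derivatives at `x` are at most `K / infDist x F`. -/
theorem exists_whitney_partition {E : Type*} [NormedAddCommGroup E] [NormedSpace ℝ E] [FiniteDimensional ℝ E]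
    (F : Set E) (hF : IsClosed F) (hne : F.Nonempty) :
    ∃ (S : Set E) (φ : S → E → ℝ) (K : ℝ), 0 ≤ K ∧ (∀ p x, 0 ≤ φ p x) ∧
      ∀ x ∉ F, ∃ t : Finset S, (t.card : ℝ) ≤ K ∧
        (∀ p ∈ t, dist x p ≤ infDist x F / 6) ∧
        (∀ p, ContDiffAt ℝ 1 (φ p) x) ∧
        (∀ p ∈ t, ‖fderiv ℝ (φ p) x‖ ≤ K / infDist x F) ∧
        ∀ᶠ y in 𝓝 x, (∀ p ∉ t, φ p y = 0) ∧ ∑ p ∈ t, φ p y = 1 := by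
  obtain ⟨S, hSF, hsep, hcov⟩ := exists_whitney_net F hF hne
  have hpos : ∀ x ∉ F, 0 < infDist x F := fun x hx => (hF.notMem_iff_infDist_pos hne).1 hx
  -- the bumps are rescaled copies of `g`; the inner radius `1 / 9` is the covering radius of the net
  let g : ContDiffBump (0 : E) := ⟨1 / 9, 1 / 8, by norm_num, by norm_num⟩
  have hgC : ContDiff ℝ 1 g := g.contDiff
  obtain ⟨C, hC⟩ : ∃ C, ∀ z, ‖fderiv ℝ g z‖ ≤ C :=
    (g.hasCompactSupport.fderiv ℝ).exists_bound_of_continuous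
      (hgC.continuous_fderiv one_ne_zero)
  have hC0 : 0 ≤ C := (norm_nonneg _).trans (hC 0)
  let b : S → E → ℝ := fun p x => g ((infDist (p : E) F)⁻¹ • (x - p))
  let G : E → ℝ := fun x => ∑ᶠ p, b p x
  have hb0 : ∀ p x, 0 ≤ b p x := fun p x => g.nonneg
  have hb1 : ∀ p x, b p x ≤ 1 := fun p x => g.le_one
  have hbsupp : ∀ p x, b p x ≠ 0 → dist x p < infDist (p : E) F / 8 := by
    intro p x h
    have hp := hpos p (hSF p.2)
    have h1 : (infDist (p : E) F)⁻¹ • (x - p) ∈ ball (0 : E) (1 / 8) := by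
      rw [← g.support_eq]; exact h
    rw [mem_ball_zero_iff, norm_smul, norm_inv, Real.norm_eq_abs, abs_of_pos hp,
      inv_mul_lt_iff₀ hp, ← dist_eq_norm] at h1
    linarith
  have hbone : ∀ (p : S) (x : E), dist x p ≤ infDist (p : E) F / 9 → b p x = 1 := by
    intro p x h
    have hp := hpos p (hSF p.2)
    refine g.one_of_mem_closedBall ?_
    rw [mem_closedBall_zero_iff, norm_smul, norm_inv, Real.norm_eq_abs, abs_of_pos hp,
      inv_mul_le_iff₀ hp, ← dist_eq_norm]
    change _ ≤ _ * (1 / 9)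
    linarith
  have hbC : ∀ p, ContDiff ℝ 1 (b p) := fun p =>
    hgC.comp (contDiff_const.smul (contDiff_id.sub contDiff_const))
  have hbd : ∀ p x, ‖fderiv ℝ (b p) x‖ ≤ C * (infDist (p : E) F)⁻¹ := by
    intro p x
    have h1 : HasFDerivAt (fun x : E => (infDist (p : E) F)⁻¹ • (x - p))
        ((infDist (p : E) F)⁻¹ • ContinuousLinearMap.id ℝ E) x :=
      ((hasFDerivAt_id x).sub_const _).const_smul _
    have h2 := ((hgC.differentiable one_ne_zero
      ((infDist (p : E) F)⁻¹ • (x - p))).hasFDerivAt).comp x h1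
    have h3 : fderiv ℝ (b p) x = _ := h2.fderiv
    rw [h3]
    refine (ContinuousLinearMap.opNorm_comp_le _ _).trans ?_
    refine mul_le_mul (hC _) ?_ (norm_nonneg _) hC0
    rw [norm_smul, norm_inv, Real.norm_eq_abs, abs_of_nonneg infDist_nonneg]
    exact mul_le_of_le_one_right (inv_nonneg.2 infDist_nonneg) ContinuousLinearMap.norm_id_le
  -- `N` bounds the number of overlapping bumps
  obtain ⟨N, hN⟩ : ∃ N : ℝ, N = 5 ^ Module.finrank ℝ E := ⟨_, rfl⟩
  have hN0 : 0 ≤ N := by rw [hN]; positivity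
  have hmain : ∀ x ∉ F, ∃ t : Finset S, (t.card : ℝ) ≤ N ∧
      (∀ p ∈ t, dist x p ≤ 4 / 25 * infDist x F) ∧
      ∀ᶠ y in 𝓝 x, (∀ p ∉ t, b p y = 0) ∧ G y = ∑ p ∈ t, b p y := by
    intro x hx
    have hdx := hpos x hx
    obtain ⟨t, htc, ht⟩ := whitney_net_finite hsep hdx
    refine ⟨t, by rw [hN]; exact_mod_cast htc, fun p hp => (ht p).1 hp, ?_⟩
    filter_upwards [ball_mem_nhds x (by positivity : 0 < infDist x F / 100)] with y hy
    rw [mem_ball] at hy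
    have hz : ∀ p ∉ t, b p y = 0 := by
      intro p hp
      by_contra h
      have h1 := hbsupp p y h
      have h2 : infDist (p : E) F ≤ infDist y F + dist (p : E) y := infDist_le_infDist_add_dist
      have h3 : infDist y F ≤ infDist x F + dist y x := infDist_le_infDist_add_dist
      have h4 := dist_triangle x y p
      rw [dist_comm (p : E) y] at h2
      rw [dist_comm x y] at h4
      exact hp ((ht p).2 (by linarith))
    refine ⟨hz, finsum_eq_sum_of_support_subset _ fun p hp => ?_⟩
    by_contra h
    exact hp (hz p h)
  have hG1 : ∀ x ∉ F, 1 ≤ G x := by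
    intro x hx
    obtain ⟨p, hp, hpx⟩ := hcov x hx
    obtain ⟨t, -, -, ht⟩ := hmain x hx
    obtain ⟨hz, hG⟩ := ht.self_of_nhds
    have hone := hbone ⟨p, hp⟩ x hpx
    have hpt : (⟨p, hp⟩ : S) ∈ t := by
      by_contra h
      rw [hz _ h] at hone
      exact zero_ne_one hone
    rw [hG, ← hone]
    exact Finset.single_le_sum (f := fun p => b p x) (fun q _ => hb0 q x) hpt
  refine ⟨S, fun p x => b p x * (G x)⁻¹, N + (1 + N) * (2 * C), by positivity,
    fun p x => mul_nonneg (hb0 p x) (inv_nonneg.2 (finsum_nonneg fun q => hb0 q x)), ?_⟩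
  intro x hx
  have hdx := hpos x hx
  obtain ⟨t, htc, htd, ht⟩ := hmain x hx
  have hGx := hG1 x hx
  have hGne : G x ≠ 0 := by positivity
  have hGe : G =ᶠ[𝓝 x] fun y => ∑ p ∈ t, b p y := ht.mono fun y hy => hy.2
  have hGC : ContDiffAt ℝ 1 G x :=
    (ContDiff.sum fun p _ => hbC p).contDiffAt.congr_of_eventuallyEq hGe
  have hbd' : ∀ p ∈ t, ‖fderiv ℝ (b p) x‖ ≤ 2 * C / infDist x F := by
    intro p hp
    have h1 := htd p hp
    have h2 : infDist x F ≤ infDist (p : E) F + dist x p := infDist_le_infDist_add_dist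
    refine (hbd p x).trans ?_
    rw [mul_comm 2 C, mul_div_assoc]
    refine mul_le_mul_of_nonneg_left ?_ hC0
    rw [inv_le_comm₀ (hpos p (hSF p.2)) (by positivity), inv_div]
    linarith
  have hGd : ‖fderiv ℝ G x‖ ≤ N * (2 * C / infDist x F) := by
    rw [hGe.fderiv_eq, fderiv_fun_sum fun p _ => (hbC p).differentiable one_ne_zero x]
    refine (norm_sum_le_of_le _ hbd').trans ?_
    rw [Finset.sum_const, nsmul_eq_mul]
    exact mul_le_mul_of_nonneg_right htc (by positivity)
  refine ⟨t, by nlinarith [mul_nonneg hN0 hC0], fun p hp => by linarith [htd p hp],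
    fun p => (hbC p).contDiffAt.mul (hGC.inv hGne), ?_, ?_⟩
  · intro p hp
    have h1 : HasFDerivAt (fun y => b p y * (G y)⁻¹) _ x :=
      ((hbC p).differentiable one_ne_zero x).hasFDerivAt.mul
        ((hasFDerivAt_inv hGne).comp x (hGC.differentiableAt one_ne_zero).hasFDerivAt)
    rw [h1.fderiv]
    have hGi : (G x)⁻¹ ≤ 1 := inv_le_one_of_one_le₀ hGx
    have hGi0 : 0 ≤ (G x)⁻¹ := by positivity
    have hA : ‖(ContinuousLinearMap.toSpanSingleton ℝ (-(G x ^ 2)⁻¹)).comp (fderiv ℝ G x)‖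
        ≤ N * (2 * C / infDist x F) := by
      refine (ContinuousLinearMap.opNorm_comp_le _ _).trans ?_
      rw [ContinuousLinearMap.norm_toSpanSingleton, norm_neg, norm_inv, norm_pow, Real.norm_eq_abs,
        abs_of_pos (by positivity), ← inv_pow]
      refine (mul_le_of_le_one_left (norm_nonneg _) (pow_le_one₀ hGi0 hGi)).trans hGd
    refine (norm_add_le _ _).trans ?_
    rw [norm_smul, norm_smul, Real.norm_of_nonneg (hb0 p x), Real.norm_of_nonneg hGi0]
    have e1 := (mul_le_of_le_one_left (norm_nonneg _) (hb1 p x)).trans hA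
    have e2 := (mul_le_of_le_one_left (norm_nonneg _) hGi).trans (hbd' p hp)
    refine (add_le_add e1 e2).trans ?_
    have : (N + (1 + N) * (2 * C)) / infDist x F =
      N / infDist x F + (N * (2 * C / infDist x F) + 2 * C / infDist x F) := by ring
    rw [this]
    have : 0 ≤ N / infDist x F := by positivity
    linarith
  · filter_upwards [ht, hF.isOpen_compl.mem_nhds hx] with y hy hyF
    refine ⟨fun p hp => by rw [hy.1 p hp, zero_mul], ?_⟩
    rw [← Finset.sum_mul, ← hy.2]
    exact mul_inv_cancel₀ (by linarith [hG1 y hyF])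


theorem norm_sum_smul_le {ι Z : Type*} [NormedAddCommGroup Z] [NormedSpace ℝ Z] {t : Finset ι}
    {w : ι → ℝ} {v : ι → Z} {M : ℝ} (hw : ∀ p ∈ t, 0 ≤ w p) (hsum : ∑ p ∈ t, w p = 1)
    (hv : ∀ p ∈ t, ‖v p‖ ≤ M) : ‖∑ p ∈ t, w p • v p‖ ≤ M :=
  calc ‖∑ p ∈ t, w p • v p‖ ≤ ∑ p ∈ t, w p * M := norm_sum_le_of_le _ fun p hp => by
        rw [norm_smul, Real.norm_of_nonneg (hw p hp)]
        exact mul_le_mul_of_nonneg_left (hv p hp) (hw p hp)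
    _ = M := by rw [← Finset.sum_mul, hsum, one_mul]

/-- The extension theorem on an arbitrary finite-dimensional real normed space. -/
theorem exists_c1_extension {E Y : Type*} [NormedAddCommGroup E] [NormedSpace ℝ E]
    [FiniteDimensional ℝ E] [NormedAddCommGroup Y] [NormedSpace ℝ Y]
    (F : Set E) (hF : IsClosed F) (hFne : F.Nonempty) (f : E → Y) (L : E → (E →L[ℝ] Y))
    (hLcont : ContinuousOn L F) (hLstrict : ∀ a ∈ F, RelStrictDerivAt f F (L a) a) :
    ∃ fbar : E → Y,
      Differentiable ℝ fbar ∧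
      Continuous (fderiv ℝ fbar) ∧
      (∀ x ∈ F, fbar x = f x) ∧
      (∀ a ∈ F, fderiv ℝ fbar a = L a) := by
  classical
  have := FiniteDimensional.proper_real E
  obtain ⟨S, φ, K, hK, hφ0, hφ⟩ := exists_whitney_partition F hF hFne
  have hpos : ∀ x ∉ F, 0 < infDist x F := fun x hx => (hF.notMem_iff_infDist_pos hFne).1 hx
  choose π hπF hπd using fun x : E => hF.exists_infDist_eq_dist hFne x
  -- the first-order Taylor polynomial prescribed at `b`
  let P : E → E → Y := fun b x => f b + L b (x - b)
  have hPd : ∀ b x, HasFDerivAt (P b) (L b) x := fun b x =>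
    (((L b).hasFDerivAt.comp x ((hasFDerivAt_id x).sub_const b))).const_add (f b)
  have hPC : ∀ b, ContDiff ℝ 1 (P b) := fun b =>
    contDiff_const.add ((L b).contDiff.comp (contDiff_id.sub contDiff_const))
  let h : E → Y := fun x => if x ∈ F then f x else ∑ᶠ p : S, φ p x • P (π p) x
  have hhF : ∀ x ∈ F, h x = f x := fun x hx => if_pos hx
  have hhU : ∀ x ∉ F, ∀ t : Finset S,
      (∀ᶠ y in 𝓝 x, (∀ p ∉ t, φ p y = 0) ∧ ∑ p ∈ t, φ p y = 1) →
      h =ᶠ[𝓝 x] fun y => ∑ p ∈ t, φ p y • P (π p) y := by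
    intro x hx t ht
    filter_upwards [ht, hF.isOpen_compl.mem_nhds hx] with y hy hyF
    have e : h y = ∑ᶠ p : S, φ p y • P (π p) y := if_neg hyF
    rw [e]
    refine finsum_eq_sum_of_support_subset _ fun p hp => ?_
    by_contra hpt
    exact hp (by simp only [hy.1 p hpt, zero_smul])
  have hhC : ∀ x ∉ F, ContDiffAt ℝ 1 h x := by
    intro x hx
    obtain ⟨t, -, -, hC, -, ht⟩ := hφ x hx
    exact (ContDiffAt.sum fun p _ => (hC p).smul (hPC _).contDiffAt).congr_of_eventuallyEq
      (hhU x hx t ht)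
  -- comparison of `h` and its derivative with an arbitrary affine map `P b` off `F`
  have hcmp : ∀ x ∉ F, ∀ b : E, ∀ A B : ℝ, 0 ≤ A →
      (∀ p : S, dist x p ≤ infDist x F / 6 → ‖P (π p) x - P b x‖ ≤ A) →
      (∀ p : S, dist x p ≤ infDist x F / 6 → ‖L (π p) - L b‖ ≤ B) →
      ‖h x - P b x‖ ≤ A ∧ ‖fderiv ℝ h x - L b‖ ≤ B + K * (K / infDist x F * A) := by
    intro x hx b A B hA hPA hLB
    have hdx := hpos x hx
    obtain ⟨t, htc, htd, hC, hφd, ht⟩ := hφ x hx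
    have hsum := ht.self_of_nhds.2
    have hdiff : (fun y => h y - P b y) =ᶠ[𝓝 x] fun y => ∑ p ∈ t, φ p y • (P (π p) y - P b y) := by
      filter_upwards [ht, hhU x hx t ht] with y hy hhy
      simp only [hhy, smul_sub, Finset.sum_sub_distrib, ← Finset.sum_smul, hy.2, one_smul]
    constructor
    · have e : h x - P b x = _ := hdiff.self_of_nhds
      rw [e]
      exact norm_sum_smul_le (fun p _ => hφ0 p x) hsum fun p hp => hPA p (htd p hp)
    · have h1 : HasFDerivAt (fun y => h y - P b y) (fderiv ℝ h x - L b) x :=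
        ((hhC x hx).differentiableAt one_ne_zero).hasFDerivAt.sub (hPd b x)
      have h2 : HasFDerivAt (fun y => ∑ p ∈ t, φ p y • (P (π p) y - P b y))
          (∑ p ∈ t, (φ p x • (L (π p) - L b) +
            (fderiv ℝ (φ p) x).smulRight (P (π p) x - P b x))) x :=
        HasFDerivAt.fun_sum fun p _ =>
          ((hC p).differentiableAt one_ne_zero).hasFDerivAt.smul ((hPd _ x).sub (hPd b x))
      rw [h1.unique (h2.congr_of_eventuallyEq hdiff), Finset.sum_add_distrib]
      refine (norm_add_le _ _).trans (add_le_add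
        (norm_sum_smul_le (fun p _ => hφ0 p x) hsum fun p hp => hLB p (htd p hp)) ?_)
      have h3 : ∀ p ∈ t, ‖(fderiv ℝ (φ p) x).smulRight (P (π p) x - P b x)‖ ≤
          K / infDist x F * A := fun p hp => by
        rw [ContinuousLinearMap.norm_smulRight_apply]
        exact mul_le_mul (hφd p hp) (hPA p (htd p hp)) (norm_nonneg _) (by positivity)
      refine (norm_sum_le_of_le _ h3).trans ?_
      rw [Finset.sum_const, nsmul_eq_mul]
      exact mul_le_mul_of_nonneg_right htc (by positivity)
  -- quantitative behaviour of `h` near a point of `F`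
  have hlim : ∀ a ∈ F, ∀ ε : ℝ, 0 < ε → ∃ δ : ℝ, 0 < δ ∧ ∀ x, dist x a < δ →
      ‖h x - P a x‖ ≤ 5 * ε * dist x a ∧
      (x ∈ F → ‖L x - L a‖ ≤ ε) ∧
      (x ∉ F → ‖fderiv ℝ h x - L a‖ ≤ (3 + 5 * K * K) * ε) := by
    intro a ha ε hε
    obtain ⟨δ₁, hδ₁, hf⟩ := hLstrict a ha ε hε
    obtain ⟨δ₂, hδ₂, hL⟩ := Metric.continuousWithinAt_iff.1 (hLcont a ha) ε hε
    replace hL : ∀ b ∈ F, dist b a < δ₂ → ‖L b - L a‖ ≤ ε := fun b hb hba => by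
      rw [← dist_eq_norm]; exact (hL hb hba).le
    replace hf : ∀ b ∈ F, ∀ c ∈ F, dist b a < δ₁ → dist c a < δ₁ →
        ‖f c - f b - L a (c - b)‖ ≤ ε * dist c b := fun b hb c hc hba hca => by
      rw [dist_eq_norm] at *; exact hf b hb c hc hba hca
    -- Whitney's compatibility estimate between two Taylor polynomials
    have hPP : ∀ b ∈ F, ∀ c ∈ F, dist b a < min δ₁ δ₂ → dist c a < min δ₁ δ₂ → ∀ x,
        ‖P c x - P b x‖ ≤ ε * (dist c b + dist x c + dist x b) := by
      intro b hb c hc hba hca x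
      have e : P c x - P b x = (f c - f b - L a (c - b)) + (L c - L a) (x - c)
          - (L b - L a) (x - b) := by
        simp only [P, sub_apply, map_sub]
        abel
      rw [e]
      have e1 := hf b hb c hc (hba.trans_le (min_le_left _ _)) (hca.trans_le (min_le_left _ _))
      have e2 := (L c - L a).le_of_opNorm_le (hL c hc (hca.trans_le (min_le_right _ _))) (x - c)
      have e3 := (L b - L a).le_of_opNorm_le (hL b hb (hba.trans_le (min_le_right _ _))) (x - b)
      rw [← dist_eq_norm] at e2 e3
      have e4 := norm_sub_le ((f c - f b - L a (c - b)) + (L c - L a) (x - c))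
        ((L b - L a) (x - b))
      have e5 := norm_add_le (f c - f b - L a (c - b)) ((L c - L a) (x - c))
      linarith
    have hmin : 0 < min δ₁ δ₂ := lt_min hδ₁ hδ₂
    refine ⟨min δ₁ δ₂ / 3, by positivity, fun x hxa => ?_⟩
    have haa : dist a a < min δ₁ δ₂ := by rwa [dist_self]
    by_cases hx : x ∈ F
    · have hxa' : dist x a < min δ₁ δ₂ := by linarith
      refine ⟨?_, fun _ => hL x hx (hxa'.trans_le (min_le_right _ _)), fun h => absurd hx h⟩
      have e := hPP a ha x hx haa hxa' x
      have e' : P x x = h x := by simp [P, hhF x hx]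
      rw [e', dist_self] at e
      nlinarith [mul_nonneg hε.le (dist_nonneg (x := x) (y := a))]
    · have hdx := hpos x hx
      have hda : infDist x F ≤ dist x a := infDist_le_dist_of_mem ha
      -- the base points used near `x` are close to `x`, hence to `a`
      have hnear : ∀ p : S, dist x p ≤ infDist x F / 6 →
          dist x (π p) ≤ 4 / 3 * infDist x F ∧ dist (π p) a ≤ 4 / 3 * infDist x F + dist x a := by
        intro p hp
        have e1 := hπd (p : E)
        have e2 : infDist (p : E) F ≤ infDist x F + dist (p : E) x := infDist_le_infDist_add_dist
        rw [dist_comm (p : E) x] at e2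
        have e3 := dist_triangle x (p : E) (π p)
        have e4 := dist_triangle_left (π (p : E)) a x
        constructor <;> linarith
      have hb1 : dist x (π x) = infDist x F := (hπd x).symm
      have hb2 : dist (π x) a ≤ infDist x F + dist x a := by
        have := dist_triangle_left (π x) a x
        linarith
      have hba : dist (π x) a < min δ₁ δ₂ := by linarith
      refine ⟨?_, fun h => absurd h hx, fun _ => ?_⟩
      · refine (hcmp x hx a (5 * ε * dist x a) ε (by positivity) ?_ ?_).1
        all_goals
          intro p hp
          obtain ⟨n1, n2⟩ := hnear p hp
          have n3 : dist (π (p : E)) a < min δ₁ δ₂ := by linarith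
        · refine (hPP a ha _ (hπF _) haa n3 x).trans ?_
          have : dist (π (p : E)) a + dist x (π p) + dist x a ≤ 5 * dist x a := by linarith
          nlinarith
        · exact hL _ (hπF _) (n3.trans_le (min_le_right _ _))
      · have e := (hcmp x hx (π x) (5 * ε * infDist x F) (2 * ε) (by positivity) ?_ ?_).2
        · have e1 := hL _ (hπF x) (hba.trans_le (min_le_right _ _))
          have e2 := norm_sub_le_norm_sub_add_norm_sub (fderiv ℝ h x) (L (π x)) (L a)
          have e3 : K * (K / infDist x F * (5 * ε * infDist x F)) = 5 * K * K * ε := by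
            field_simp
          linarith
        all_goals
          intro p hp
          obtain ⟨n1, n2⟩ := hnear p hp
          have n3 : dist (π (p : E)) a < min δ₁ δ₂ := by linarith
        · refine (hPP _ (hπF x) _ (hπF _) hba n3 x).trans ?_
          have n4 := dist_triangle_left (π (p : E)) (π x) x
          have : dist (π (p : E)) (π x) + dist x (π p) + dist x (π x) ≤ 5 * infDist x F := by
            linarith
          nlinarith
        · have e1 := hL _ (hπF x) (hba.trans_le (min_le_right _ _))
          have e2 := hL _ (hπF p) (n3.trans_le (min_le_right _ _))
          have e3 := norm_sub_le_norm_sub_add_norm_sub (L (π p)) (L a) (L (π x))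
          rw [norm_sub_rev (L a)] at e3
          linarith
  have hderiv : ∀ a ∈ F, HasFDerivAt h (L a) a := by
    intro a ha
    rw [hasFDerivAt_iff_isLittleO, Asymptotics.isLittleO_iff]
    intro c hc
    obtain ⟨δ, hδ, hx⟩ := hlim a ha (c / 5) (by positivity)
    filter_upwards [ball_mem_nhds a hδ] with x hxa
    have e := (hx x hxa).1
    rw [hhF a ha, sub_sub, ← dist_eq_norm x a]
    exact e.trans (by linarith)
  refine ⟨h, fun x => ?_, continuous_iff_continuousAt.2 fun x => ?_, hhF,
    fun a ha => (hderiv a ha).fderiv⟩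
  · by_cases hx : x ∈ F
    · exact (hderiv x hx).differentiableAt
    · exact (hhC x hx).differentiableAt one_ne_zero
  · by_cases hx : x ∈ F
    · rw [Metric.continuousAt_iff]
      intro ε hε
      obtain ⟨δ, hδ, hy⟩ := hlim x hx (ε / (2 * (3 + 5 * K * K))) (by positivity)
      refine ⟨δ, hδ, fun y hyx => ?_⟩
      have hM : (3 + 5 * K * K) * (ε / (2 * (3 + 5 * K * K))) = ε / 2 := by field_simp
      obtain ⟨-, y1, y2⟩ := hy y hyx
      rw [(hderiv x hx).fderiv, dist_eq_norm]
      by_cases hyF : y ∈ F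
      · rw [(hderiv y hyF).fderiv]
        have : 0 < ε / (2 * (3 + 5 * K * K)) := by positivity
        nlinarith [y1 hyF, mul_nonneg hK hK]
      · linarith [y2 hyF]
    · exact ((hhC x hx).fderiv_right (m := 0) (by norm_num)).continuousAt

/-- `C^1` extension of vector-valued functions that are strictly differentiable on a
nonempty closed set `F ⊆ ℝⁿ` with a continuous pre-assigned derivative `L`. -/
theorem c1_extension_of_strictly_differentiable
    (n : ℕ) {Y : Type*} [NormedAddCommGroup Y] [NormedSpace ℝ Y]
    (F : Set (EuclideanSpace ℝ (Fin n))) (hF : IsClosed F) (hFne : F.Nonempty)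
    (f : EuclideanSpace ℝ (Fin n) → Y)
    (L : EuclideanSpace ℝ (Fin n) → (EuclideanSpace ℝ (Fin n) →L[ℝ] Y))
    (hLcont : ContinuousOn L F)
    (hLstrict : ∀ a ∈ F, RelStrictDerivAt f F (L a) a) :
    ∃ fbar : EuclideanSpace ℝ (Fin n) → Y,
      Differentiable ℝ fbar ∧
      Continuous (fderiv ℝ fbar) ∧
      (∀ x ∈ F, fbar x = f x) ∧
      (∀ a ∈ F, fderiv ℝ fbar a = L a) :=
  exists_c1_extension F hF hFne f L hLcont hLstrict
end

section
/- Let n ∈ ℕ, Y a normed linear space, F ⊆ ℝⁿ, and x ∈ F an accumulation point of F. Let f : F → Y and let L : ℝⁿ → Y be a bounded linear operator which is a relative strict derivative of f at x with respect to F. Let v₁, …, v_n ∈ Ptg(F,x) be unit vectors with |det(v₁,…,v_n)| > d > 0. Then the operator norm of L satisfies ‖L‖ ≤ (n/d) · limsup_{y→x, z→x, y,z∈F, y≠z} ‖f(y) − f(z)‖ / |y − z|; equivalently, if M ≥ 0 and δ > 0 are such that ‖f(y) − f(z)‖ ≤ M |y − z| for all distinct y, z ∈ F with |y − x| < δ and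 |z − x| < δ, then ‖L‖ ≤ n M / d. -/
/-!
Every paratingent direction `w` is a limit of vectors `α_k (y_k - x_k)` with `x_k, y_k ∈ F` close to
`x`. On a difference `y - z` of such points `L` agrees with `f y - f z` up to `ε ‖y - z‖`, so
`‖L w‖ ≤ M ‖w‖` in the limit (`norm_apply_le_of_mem_Ptg`). In particular `‖L (v i)‖ ≤ M`.

For arbitrary `u`, Cramer's rule gives `D • u = ∑ i, D_i • v i`, where `D = det (v₁, …, vₙ)` and `D_i`
is the same determinant with `v i` replaced by `u`. Hadamard's inequality (`abs_det_le_prod_norm`)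
and `‖v j‖ = 1` give `|D_i| ≤ ‖u‖`. Applying `L` yields `|D| ‖L u‖ ≤ n M ‖u‖`, and `d < |D|`.
-/

open Filter Metric Set Topology

/-- The paratingent cone of `F` at `x`. -/
def Ptg {E : Type*} [NormedAddCommGroup E] [NormedSpace ℝ E] (F : Set E) (x : E) : Set E :=
  {v | ∃ (xk yk : ℕ → E) (αk : ℕ → ℝ),
    (∀ k, xk k ∈ F) ∧ (∀ k, yk k ∈ F) ∧
    Tendsto xk atTop (𝓝 x) ∧ Tendsto yk atTop (𝓝 x) ∧
    Tendsto (fun k => αk k • (yk k - xk k)) atTop (𝓝 v)}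

theorem norm_apply_le_of_mem_Ptg {E : Type*} [NormedAddCommGroup E] [NormedSpace ℝ E]
    {Y : Type*} [NormedAddCommGroup Y] [NormedSpace ℝ Y]
    {F : Set E} {x : E} {f : E → Y} {L : E →L[ℝ] Y} (hL : RelStrictDerivAt f F L x)
    {M δ : ℝ} (hδ : 0 < δ)
    (hlip : ∀ y ∈ F, ∀ z ∈ F, y ≠ z → ‖y - x‖ < δ → ‖z - x‖ < δ →
      ‖f y - f z‖ ≤ M * ‖y - z‖)
    {w : E} (hw : w ∈ Ptg F x) : ‖L w‖ ≤ M * ‖w‖ := by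
  obtain ⟨xk, yk, αk, hxk, hyk, hxt, hyt, ht⟩ := hw
  have key : ∀ ε : ℝ, 0 < ε → ‖L w‖ ≤ (M + ε) * ‖w‖ := by
    intro ε hε
    obtain ⟨η, hη, hT⟩ := hL ε hε
    have near : ∀ {u : ℕ → E}, Tendsto u atTop (𝓝 x) → ∀ {r : ℝ}, 0 < r →
        ∀ᶠ k in atTop, ‖u k - x‖ < r := by
      intro u hu r hr
      filter_upwards [hu.eventually (ball_mem_nhds x hr)] with k hk
      exact mem_ball_iff_norm.mp hk
    have hev : ∀ᶠ k in atTop,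
        ‖L (αk k • (yk k - xk k))‖ ≤ (M + ε) * ‖αk k • (yk k - xk k)‖ := by
      filter_upwards [near hxt hη, near hyt hη, near hxt hδ, near hyt hδ] with k h1 h2 h3 h4
      have hdiff : ‖L (yk k - xk k)‖ ≤ (M + ε) * ‖yk k - xk k‖ := by
        rcases eq_or_ne (yk k) (xk k) with h | h
        · simp [h]
        · have hf := hlip _ (hyk k) _ (hxk k) h h4 h3
          have hs := hT _ (hxk k) _ (hyk k) h1 h2
          have htri := norm_sub_le (f (yk k) - f (xk k))
            (f (yk k) - f (xk k) - L (yk k - xk k))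
          rw [sub_sub_cancel] at htri
          linarith
      rw [map_smul, norm_smul, norm_smul, mul_left_comm]
      exact mul_le_mul_of_nonneg_left hdiff (norm_nonneg _)
    exact le_of_tendsto_of_tendsto ((L.continuous.tendsto w).comp ht).norm
      (ht.norm.const_mul _) hev
  -- Let `ε → 0⁺`.
  have hlim : Tendsto (fun ε : ℝ => (M + ε) * ‖w‖) (𝓝[>] 0) (𝓝 ((M + 0) * ‖w‖)) :=
    (Continuous.tendsto (by fun_prop) 0).mono_left nhdsWithin_le_nhds
  rw [add_zero] at hlim
  exact ge_of_tendsto hlim (eventually_nhdsWithin_of_forall fun ε hε => key ε hε)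

/-- Hadamard's inequality: in the standard orthonormal basis the determinant is the volume form. -/
theorem abs_det_le_prod_norm {n : ℕ} (v : Fin n → EuclideanSpace ℝ (Fin n)) :
    |Matrix.det (Matrix.of fun i j => v j i)| ≤ ∏ i, ‖v i‖ := by
  have : Fact (Module.finrank ℝ (EuclideanSpace ℝ (Fin n)) = n) := ⟨by simp⟩
  set b := EuclideanSpace.basisFun (Fin n) ℝ
  have h := b.toBasis.orientation.abs_volumeForm_apply_le v
  rw [b.toBasis.orientation.volumeForm_robust b rfl, Module.Basis.det_apply] at h
  convert h using 3
  ext i j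
  simp [b, Module.Basis.toMatrix_apply]

/-- If `L` is a relative strict derivative of `f` at an accumulation point `x` of `F`,
and the paratingent cone `Ptg(F,x)` contains unit vectors `v₁,…,vₙ` with
`|det(v₁,…,vₙ)| > d > 0`, then any local Lipschitz bound `M` for `f` on `F` near `x`
yields the estimate `‖L‖ ≤ n·M/d`. -/
theorem norm_strict_deriv_le_of_paratingent
    (n : ℕ) {Y : Type*} [NormedAddCommGroup Y] [NormedSpace ℝ Y]
    (F : Set (EuclideanSpace ℝ (Fin n)))
    (x : EuclideanSpace ℝ (Fin n)) (hxF : x ∈ F) (hacc : x ∈ closure (F \ {x}))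
    (f : EuclideanSpace ℝ (Fin n) → Y)
    (L : EuclideanSpace ℝ (Fin n) →L[ℝ] Y)
    (hL : RelStrictDerivAt f F L x)
    (v : Fin n → EuclideanSpace ℝ (Fin n))
    (hv : ∀ i, v i ∈ Ptg F x) (hvnorm : ∀ i, ‖v i‖ = 1)
    (d : ℝ) (hd : 0 < d)
    (hdet : d < |Matrix.det (Matrix.of fun i j => v j i)|)
    (M δ : ℝ) (hM : 0 ≤ M) (hδ : 0 < δ)
    (hlip : ∀ y ∈ F, ∀ z ∈ F, y ≠ z → ‖y - x‖ < δ → ‖z - x‖ < δ →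
      ‖f y - f z‖ ≤ M * ‖y - z‖) :
    ‖L‖ ≤ n * M / d := by
  have hLv : ∀ i, ‖L (v i)‖ ≤ M := fun i => by
    simpa [hvnorm i] using norm_apply_le_of_mem_Ptg hL hδ hlip (hv i)
  refine L.opNorm_le_bound (by positivity) fun u => ?_
  set A : Matrix (Fin n) (Fin n) ℝ := Matrix.of fun i j => v j i with hA
  have hcramer : A.det • u = ∑ i, A.cramer u i • v i := by
    ext j
    have h := congrFun (Matrix.mulVec_cramer A u) j
    simp only [Matrix.mulVec, dotProduct, Pi.smul_apply] at h
    simp only [PiLp.smul_apply, WithLp.ofLp_sum, WithLp.ofLp_smul, Finset.sum_apply,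
      Pi.smul_apply, smul_eq_mul] at h ⊢
    rw [← h]
    exact Finset.sum_congr rfl fun i _ => mul_comm _ _
  have hcoef : ∀ i, |A.cramer u i| ≤ ‖u‖ := by
    intro i
    have h := abs_det_le_prod_norm (Function.update v i u)
    have hprod : ∏ j, ‖Function.update v i u j‖ = ‖u‖ := by
      rw [Finset.prod_eq_single i]
      · simp
      · intro j _ hj
        simp [Function.update_of_ne hj, hvnorm]
      · simp
    rw [hprod] at h
    rw [Matrix.cramer_apply]
    convert h using 3
    ext k j
    rcases eq_or_ne j i with rfl | hj
    · simp
    · simp [hj, hA]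
  have hbound : |A.det| * ‖L u‖ ≤ n * M * ‖u‖ := by
    calc |A.det| * ‖L u‖ = ‖L (A.det • u)‖ := by rw [map_smul, norm_smul, Real.norm_eq_abs]
      _ = ‖∑ i, A.cramer u i • L (v i)‖ := by rw [hcramer, map_sum]; simp only [map_smul]
      _ ≤ ∑ i : Fin n, ‖u‖ * M := by
        refine norm_sum_le_of_le _ fun i _ => ?_
        rw [norm_smul, Real.norm_eq_abs]
        exact mul_le_mul (hcoef i) (hLv i) (norm_nonneg _) (norm_nonneg _)
      _ = n * M * ‖u‖ := by simp; ring
  rw [div_mul_eq_mul_div, le_div_iff₀ hd, mul_comm]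
  exact (mul_le_mul_of_nonneg_right hdet.le (norm_nonneg _)).trans hbound
end

section
/- Let n ∈ ℕ, Y a normed linear space, F ⊆ ℝⁿ and x ∈ F an accumulation point of F. Suppose the paratingent cone Ptg(F,x) spans ℝⁿ. If L₁ and L₂ are both relative strict derivatives of a function f : F → Y at x (with respect to F), then L₁ = L₂. -/
/-! Subtracting the estimates for the two strict derivatives at the same pair of points eliminates
the function and leaves `‖(L₁ - L₂) (y - x)‖ ≤ 2 ε ‖y - x‖` for points of `F` near the base point.
This inequality is homogeneous in `y - x`, so it passes to the limits `v` of rescaled differences,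
i.e. to `v ∈ Ptg F x`. Letting `ε → 0`, `L₁` and `L₂` agree on the paratingent cone, hence on
its span. -/

open Filter Metric Set Topology

/-- Two strict derivatives agree on the paratingent cone: the estimate on differences
of nearby points of `F` is scale invariant, hence closed under the limits defining the cone. -/
lemma RelStrictDerivAt.eq_of_mem_ptg {E Y : Type*} [NormedAddCommGroup E] [NormedSpace ℝ E]
    [NormedAddCommGroup Y] [NormedSpace ℝ Y] {F : Set E} {a v : E} {f : E → Y} {L₁ L₂ : E →L[ℝ] Y}
    (h₁ : RelStrictDerivAt f F L₁ a) (h₂ : RelStrictDerivAt f F L₂ a) (hv : v ∈ Ptg F a) :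
    L₁ v = L₂ v := by
  obtain ⟨p, q, α, hp, hq, hpa, hqa, hlim⟩ := hv
  have key : ∀ ε : ℝ, 0 < ε → ‖(L₁ - L₂) v‖ ≤ 2 * ε * ‖v‖ := by
    intro ε hε
    obtain ⟨δ₁, hδ₁, H₁⟩ := h₁ ε hε
    obtain ⟨δ₂, hδ₂, H₂⟩ := h₂ ε hε
    have near : ∀ {u : ℕ → E}, Tendsto u atTop (𝓝 a) → ∀ δ : ℝ, 0 < δ →
        ∀ᶠ k in atTop, ‖u k - a‖ < δ := fun hu δ hδ => by
      simpa [dist_eq_norm] using Metric.tendsto_nhds.1 hu δ hδ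
    refine le_of_tendsto_of_tendsto (((L₁ - L₂).continuous.tendsto v).comp hlim).norm
      (hlim.norm.const_mul (2 * ε)) ?_
    filter_upwards [near hpa δ₁ hδ₁, near hqa δ₁ hδ₁, near hpa δ₂ hδ₂, near hqa δ₂ hδ₂]
      with k a₁ b₁ a₂ b₂
    have e₁ := H₁ _ (hp k) _ (hq k) a₁ b₁
    have e₂ := H₂ _ (hp k) _ (hq k) a₂ b₂
    have e : ‖(L₁ - L₂) (q k - p k)‖ ≤ 2 * ε * ‖q k - p k‖ := by
      calc ‖(L₁ - L₂) (q k - p k)‖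
          = ‖(f (q k) - f (p k) - L₂ (q k - p k)) - (f (q k) - f (p k) - L₁ (q k - p k))‖ := by
            rw [sub_sub_sub_cancel_left, sub_apply]
        _ ≤ _ := (norm_sub_le _ _).trans (by linarith)
    simp only [Function.comp_apply, map_smul, norm_smul]
    calc ‖α k‖ * ‖(L₁ - L₂) (q k - p k)‖ ≤ ‖α k‖ * (2 * ε * ‖q k - p k‖) := by gcongr
      _ = 2 * ε * (‖α k‖ * ‖q k - p k‖) := by ring
  have lim : Tendsto (fun ε : ℝ => 2 * ε * ‖v‖) (𝓝[>] 0) (𝓝 0) := by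
    have : Continuous fun ε : ℝ => 2 * ε * ‖v‖ := by fun_prop
    simpa using (this.tendsto 0).mono_left nhdsWithin_le_nhds
  have h0 : ‖(L₁ - L₂) v‖ ≤ 0 :=
    ge_of_tendsto lim (by filter_upwards [self_mem_nhdsWithin] with ε hε using key ε hε)
  exact sub_eq_zero.1 (by simpa using norm_le_zero_iff.1 h0)

/-- Uniqueness of the relative strict derivative at an accumulation point `x` of `F`
whose paratingent cone spans `ℝⁿ`. -/
theorem strict_deriv_unique_of_paratingent_spans
    (n : ℕ) {Y : Type*} [NormedAddCommGroup Y] [NormedSpace ℝ Y]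
    (F : Set (EuclideanSpace ℝ (Fin n)))
    (x : EuclideanSpace ℝ (Fin n)) (hxF : x ∈ F) (hacc : x ∈ closure (F \ {x}))
    (hspan : Submodule.span ℝ (Ptg F x) = ⊤)
    (f : EuclideanSpace ℝ (Fin n) → Y)
    (L₁ L₂ : EuclideanSpace ℝ (Fin n) →L[ℝ] Y)
    (h₁ : RelStrictDerivAt f F L₁ x) (h₂ : RelStrictDerivAt f F L₂ x) :
    L₁ = L₂ := by
  refine ContinuousLinearMap.coe_injective (LinearMap.ext_on hspan ?_)
  exact fun v hv => h₁.eq_of_mem_ptg h₂ hv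
end

section
/- Let n ∈ ℕ and let F ⊆ ℝⁿ be a nonempty closed set such that the paratingent cone Ptg(F,x) spans ℝⁿ for every accumulation point x of F. Let Y be a normed linear space and let f : F → Y be a function which has a relative strict derivative (with respect to F) at every accumulation point of F. Then there exists a function f̄ : ℝⁿ → Y such that f̄ = f on F and f̄ is Fréchet differentiable at every point of ℝⁿ. -/
/-!
The extension is a smooth blend, on the complement of `F`, of affine functions
`x ↦ f (p z) + L z (x - p z)` attached to points `z ∉ F`, where `p z` is a nearest point of `F`.

Write `d` for the distance from `z` to `F`.  The linear map `L z` is chosen so that it is, up to an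
error `d`, the best linear approximation to the increments of `f` on `F ∩ ball z √d`, among the
linear maps of norm at most `d ^ (-1/4)`; if that set has at most one point, then `L z = 0`.

Let `a` be an accumulation point of `F` with strict derivative `T`, and let `z → a`.
* If `dist z a < √d / 2`, then `T` is itself an admissible competitor, so both `T` and `L z`
  approximate `f` well on `F ∩ ball a (√d / 2)`.  Hence `L z - T` is small on `Ptg F a`, and
  therefore in norm, since `Ptg F a` spans the space.
* Otherwise `d` is much smaller than `dist z a`, and the bound `d ^ (-1/4)` suffices to show that
  `‖L z - T‖ * d` is negligible compared with `dist z a`.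

In both cases the affine function of `z` agrees with `f a + T (x - a)` up to `o(‖x - a‖)` for
`x` with `dist x z < d / 2`.  Balls being convex, this estimate passes to smooth functions with
values in the convex hull of these affine values, which exist by a partition of unity.  At an
isolated point `a` of `F` the nearby affine functions are constantly `f a`.
-/

open Filter Metric Set Topology

/-- The set of accumulation points of `F`. -/
def derSet {E : Type*} [TopologicalSpace E] (F : Set E) : Set E :=
  {x | x ∈ closure (F \ {x})}

/-- `L` approximates the increments of `f` on `A` with relative error at most `ε`. -/
def GoodOn {E : Type*} [NormedAddCommGroup E] [NormedSpace ℝ E]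
    {Y : Type*} [NormedAddCommGroup Y] [NormedSpace ℝ Y]
    (f : E → Y) (A : Set E) (ε : ℝ) (L : E →L[ℝ] Y) : Prop :=
  ∀ x ∈ A, ∀ y ∈ A, ‖f y - f x - L (y - x)‖ ≤ ε * ‖y - x‖

/-- An almost optimal linear approximation on `A` among the maps with `s * ‖L‖ ≤ 1`. -/
lemma exists_almost_best {E : Type*} [NormedAddCommGroup E] [NormedSpace ℝ E]
    {Y : Type*} [NormedAddCommGroup Y] [NormedSpace ℝ Y]
    (f : E → Y) (A : Set E) (s d : ℝ) (hd : 0 < d) :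
    ∃ L : E →L[ℝ] Y, s * ‖L‖ ≤ 1 ∧ (A.Subsingleton → L = 0) ∧
      ∀ ε : ℝ, 0 ≤ ε → ∀ L' : E →L[ℝ] Y, s * ‖L'‖ ≤ 1 → GoodOn f A ε L' →
        GoodOn f A (ε + d) L := by
  by_cases hA : A.Subsingleton
  · refine ⟨0, by simp, fun _ => rfl, ?_⟩
    intro ε _ L' _ _ x hx y hy
    simp [hA hx hy]
  let S : Set ℝ := {ε | 0 ≤ ε ∧ ∃ L : E →L[ℝ] Y, s * ‖L‖ ≤ 1 ∧ GoodOn f A ε L}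
  by_cases hS : S.Nonempty
  · obtain ⟨ε, ⟨-, L, hL, hg⟩, hlt⟩ := exists_lt_of_csInf_lt hS (lt_add_of_pos_right (sInf S) hd)
    refine ⟨L, hL, fun h => absurd h hA, ?_⟩
    intro ε' hε' L' hL' hg' x hx y hy
    have h1 : sInf S ≤ ε' := csInf_le ⟨0, fun _ h => h.1⟩ ⟨hε', L', hL', hg'⟩
    exact (hg x hx y hy).trans (by gcongr; linarith)
  · refine ⟨0, by simp, fun _ => rfl, ?_⟩
    intro ε hε L' hL' hg
    exact absurd ⟨ε, hε, L', hL', hg⟩ hS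

/-- A map between approximations that are both good near `a` is small along the paratingent
cone. -/
lemma norm_sub_apply_le_of_mem_Ptg {E : Type*} [NormedAddCommGroup E] [NormedSpace ℝ E]
    {Y : Type*} [NormedAddCommGroup Y] [NormedSpace ℝ Y]
    {f : E → Y} {F : Set E} {a v : E} {R ε ε' : ℝ} {L T : E →L[ℝ] Y} (hR : 0 < R)
    (hL : GoodOn f (F ∩ ball a R) ε L) (hT : GoodOn f (F ∩ ball a R) ε' T) (hv : v ∈ Ptg F a) :
    ‖(L - T) v‖ ≤ (ε + ε') * ‖v‖ := by
  obtain ⟨x, y, α, hx, hy, hxa, hya, hlim⟩ := hv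
  have h1 : Tendsto (fun k => ‖(L - T) (α k • (y k - x k))‖) atTop (𝓝 ‖(L - T) v‖) :=
    (((L - T).continuous.tendsto v).comp hlim).norm
  refine le_of_tendsto_of_tendsto h1 (hlim.norm.const_mul (ε + ε')) ?_
  filter_upwards [hxa (ball_mem_nhds a hR), hya (ball_mem_nhds a hR)] with k hk hk'
  have h2 := hL _ ⟨hx k, hk⟩ _ ⟨hy k, hk'⟩
  have h3 := hT _ ⟨hx k, hk⟩ _ ⟨hy k, hk'⟩
  have h4 : ‖(L - T) (y k - x k)‖ ≤ (ε + ε') * ‖y k - x k‖ := by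
    have : (L - T) (y k - x k) = (f (y k) - f (x k) - T (y k - x k))
        - (f (y k) - f (x k) - L (y k - x k)) := by
      rw [_root_.sub_apply]; abel
    rw [this]
    exact (norm_sub_le _ _).trans (by linarith)
  rw [map_smul, norm_smul, norm_smul]
  calc ‖α k‖ * ‖(L - T) (y k - x k)‖ ≤ ‖α k‖ * ((ε + ε') * ‖y k - x k‖) := by gcongr
    _ = _ := by ring

lemma exists_norm_le_of_span {E : Type*} [NormedAddCommGroup E] [NormedSpace ℝ E]
    [FiniteDimensional ℝ E] (Y : Type*) [NormedAddCommGroup Y] [NormedSpace ℝ Y]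
    {V : Set E} (hV : Submodule.span ℝ V = ⊤) :
    ∃ C : ℝ, 0 < C ∧ ∀ (S : E →L[ℝ] Y) (m : ℝ), 0 ≤ m → (∀ v ∈ V, ‖S v‖ ≤ m * ‖v‖) →
      ‖S‖ ≤ C * m := by
  let b := Module.Basis.ofSpan hV.ge
  have hfin := Module.Finite.finite_basis b
  have := Fintype.ofFinite ((linearIndepOn_empty ℝ id).extend (empty_subset V))
  obtain ⟨C, hC, h⟩ := b.exists_opNorm_le (F := Y)
  refine ⟨C * (1 + ∑ i, ‖b i‖), by positivity, fun S m hm hS => ?_⟩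
  have := @h S (m * (1 + ∑ i, ‖b i‖)) (by positivity) (fun i => by
    refine (hS _ (Module.Basis.ofSpan_subset hV.ge ⟨i, rfl⟩)).trans ?_
    gcongr
    have := Finset.single_le_sum (f := fun i => ‖b i‖) (fun j _ => norm_nonneg (b j))
      (Finset.mem_univ i)
    linarith)
  linarith

/-- Elementary distances between a point `a ∈ F`, a point `z` at distance `d` from `F`,
a nearest point `p` of `F`, and a point `x` near `z`. -/
lemma whitney_distances {E : Type*} [NormedAddCommGroup E]
    {F : Set E} {a x z p : E} (ha : a ∈ F) (hpd : infDist z F = dist z p)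
    (hxz : dist x z < infDist z F / 2) :
    infDist z F ≤ 2 * dist x a ∧ dist x p ≤ 2 * infDist z F ∧ dist p a ≤ 5 * dist x a ∧
      dist z a ≤ 2 * dist x a := by
  have h0 : 0 ≤ infDist z F := infDist_nonneg
  have h1 : infDist z F ≤ dist z a := infDist_le_dist_of_mem ha
  have h2 : dist z a ≤ dist x z + dist x a := dist_triangle_left z a x
  have h3 : dist x p ≤ dist x z + dist z p := dist_triangle x z p
  have h4 : dist p a ≤ dist x p + dist x a := dist_triangle_left p a x
  refine ⟨?_, ?_, ?_, ?_⟩ <;> linarith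

/-- The affine functions attached to points `z ∉ F` approximate the tangent map at an accumulation
point `a` to first order. -/
lemma estimate_of_mem_derSet {E : Type*} [NormedAddCommGroup E] [NormedSpace ℝ E]
    [FiniteDimensional ℝ E] {Y : Type*} [NormedAddCommGroup Y] [NormedSpace ℝ Y]
    {F : Set E} {f : E → Y} {p : E → E} {s : E → ℝ} {L : E → E →L[ℝ] Y}
    (hp : ∀ z, p z ∈ F ∧ infDist z F = dist z (p z))
    (hs : ∀ z, 0 ≤ s z ∧ s z ^ 4 = infDist z F)
    (hL : ∀ z ∉ F, s z * ‖L z‖ ≤ 1)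
    (hbest : ∀ z ∉ F, ∀ ε : ℝ, 0 ≤ ε → ∀ L' : E →L[ℝ] Y, s z * ‖L'‖ ≤ 1 →
      GoodOn f (F ∩ ball z (s z ^ 2)) ε L' →
        GoodOn f (F ∩ ball z (s z ^ 2)) (ε + infDist z F) (L z))
    (hF : IsClosed F) {a : E} (ha : a ∈ F) (hspan : Submodule.span ℝ (Ptg F a) = ⊤)
    {T : E →L[ℝ] Y} (hT : RelStrictDerivAt f F T a) {η : ℝ} (hη : 0 < η) :
    ∃ ρ > 0, ∀ x, dist x a < ρ → ∀ z ∉ F, dist x z < infDist z F / 2 →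
      ‖f (p z) + L z (x - p z) - f a - T (x - a)‖ ≤ η * ‖x - a‖ := by
  obtain ⟨C, hC, hCS⟩ := exists_norm_le_of_span Y hspan
  set ε : ℝ := η / (2 * (5 + 8 * C)) with hε
  have hε0 : 0 < ε := by positivity
  have hεη : (5 + 8 * C) * ε = η / 2 := by rw [hε]; field_simp
  obtain ⟨δ, hδ, hgood⟩ := hT ε hε0
  -- Smallness conditions on `s z`, all of which hold near `0`.
  obtain ⟨σ, hσ, hsmall⟩ : ∃ σ > 0, ∀ t : ℝ, 0 ≤ t → t < σ →
      8 * (t + ‖T‖ * t ^ 2) < η / 2 ∧ 4 * C * t ^ 4 < η / 2 ∧ t * ‖T‖ < 1 ∧ t ^ 2 < δ / 2 := by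
    have c1 : ∀ᶠ t in 𝓝 (0 : ℝ), 8 * (t + ‖T‖ * t ^ 2) < η / 2 :=
      (Continuous.tendsto' (by fun_prop) 0 0 (by simp)).eventually_lt_const (by positivity)
    have c2 : ∀ᶠ t in 𝓝 (0 : ℝ), 4 * C * t ^ 4 < η / 2 :=
      (Continuous.tendsto' (by fun_prop) 0 0 (by simp)).eventually_lt_const (by positivity)
    have c3 : ∀ᶠ t in 𝓝 (0 : ℝ), t * ‖T‖ < 1 :=
      (Continuous.tendsto' (by fun_prop) 0 0 (by simp)).eventually_lt_const (by positivity)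
    have c4 : ∀ᶠ t in 𝓝 (0 : ℝ), t ^ 2 < δ / 2 :=
      (Continuous.tendsto' (by fun_prop) 0 0 (by simp)).eventually_lt_const (by positivity)
    obtain ⟨σ, hσ, h⟩ := Metric.eventually_nhds_iff.1 (c1.and (c2.and (c3.and c4)))
    exact ⟨σ, hσ, fun t ht htσ => h (by rwa [Real.dist_0_eq_abs, abs_of_nonneg ht])⟩
  refine ⟨min (δ / 5) (min (δ / 4) (σ ^ 4 / 2)), by positivity, fun x hx z hz hxz => ?_⟩
  obtain ⟨hx1, hx2, hx3⟩ : dist x a < δ / 5 ∧ dist x a < δ / 4 ∧ dist x a < σ ^ 4 / 2 := by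
    simpa [lt_min_iff] using hx
  obtain ⟨hpF, hpd⟩ := hp z
  obtain ⟨hs0, hs4⟩ := hs z
  obtain ⟨hd, hxp, hpa, hza⟩ := whitney_distances ha hpd hxz
  have hdpos : 0 < infDist z F := (hF.notMem_iff_infDist_pos ⟨a, ha⟩).1 hz
  have hspos : 0 < s z := by
    rcases hs0.eq_or_lt with h | h
    · rw [← h] at hs4; simp at hs4; linarith
    · exact h
  have hsσ : s z < σ := lt_of_pow_lt_pow_left₀ 4 hσ.le (by rw [hs4]; linarith)
  obtain ⟨k1, k2, k3, k4⟩ := hsmall _ hs0 hsσ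
  set r := dist x a with hr
  have hr0 : 0 ≤ r := dist_nonneg
  have hfirst : ‖f (p z) - f a - T (p z - a)‖ ≤ ε * (5 * r) := by
    refine (hgood a ha (p z) hpF (by simpa using hδ) ?_).trans ?_
    · rw [← dist_eq_norm]; linarith
    · rw [← dist_eq_norm]; gcongr
  have hsecond : ‖L z - T‖ * infDist z F ≤ 4 * C * ε * r + η / 4 * r := by
    by_cases hcase : dist z a < s z ^ 2 / 2
    · have hTg : GoodOn f (F ∩ ball z (s z ^ 2)) ε T := by
        have key : ∀ u ∈ F ∩ ball z (s z ^ 2), ‖u - a‖ < δ := fun u hu => by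
          rw [← dist_eq_norm]
          have := dist_triangle u z a
          have := mem_ball.1 hu.2
          linarith
        exact fun u hu v hv => hgood u hu.1 v hv.1 (key u hu) (key v hv)
      have hLg := hbest z hz ε hε0.le T k3.le hTg
      have hsub : F ∩ ball a (s z ^ 2 / 2) ⊆ F ∩ ball z (s z ^ 2) :=
        inter_subset_inter_right _ (ball_subset_ball' (by rw [dist_comm]; linarith))
      have hn : ‖L z - T‖ ≤ C * (ε + infDist z F + ε) := by
        refine hCS _ _ (by positivity) fun v hv => ?_
        exact norm_sub_apply_le_of_mem_Ptg (by positivity : 0 < s z ^ 2 / 2)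
          (fun u hu w hw => hLg u (hsub hu) w (hsub hw))
          (fun u hu w hw => hTg u (hsub hu) w (hsub hw)) hv
      calc ‖L z - T‖ * infDist z F ≤ (C * (ε + infDist z F + ε)) * (2 * r) := by gcongr
        _ = 4 * C * ε * r + (4 * C * infDist z F) / 2 * r := by ring
        _ ≤ 4 * C * ε * r + η / 4 * r := by
          rw [← hs4]
          have : 4 * C * s z ^ 4 / 2 ≤ η / 4 := by linarith
          gcongr 4 * C * ε * r + ?_
          exact mul_le_mul_of_nonneg_right this hr0
    · have hs2 : s z ^ 2 ≤ 4 * r := by linarith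
      have h1 : ‖L z - T‖ ≤ ‖L z‖ + ‖T‖ := norm_sub_le _ _
      calc ‖L z - T‖ * infDist z F ≤ (‖L z‖ + ‖T‖) * infDist z F := by gcongr
        _ = ((s z * ‖L z‖) * s z + ‖T‖ * s z ^ 2) * s z ^ 2 := by rw [← hs4]; ring
        _ ≤ (1 * s z + ‖T‖ * s z ^ 2) * (4 * r) := by gcongr; exact hL z hz
        _ = (8 * (s z + ‖T‖ * s z ^ 2)) / 2 * r := by ring
        _ ≤ η / 4 * r := mul_le_mul_of_nonneg_right (by linarith) hr0
        _ ≤ _ := by have : 0 ≤ 4 * C * ε * r := by positivity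
                    linarith
  have hsplit : f (p z) + L z (x - p z) - f a - T (x - a)
      = (f (p z) - f a - T (p z - a)) + (L z - T) (x - p z) := by
    have : x - a = (p z - a) + (x - p z) := by abel
    rw [this, map_add, _root_.sub_apply]; abel
  rw [hsplit, ← dist_eq_norm x a, ← hr]
  calc _ ≤ ε * (5 * r) + ‖L z - T‖ * (2 * infDist z F) := by
        refine (norm_add_le _ _).trans (add_le_add hfirst ?_)
        refine ((L z - T).le_opNorm _).trans ?_
        rw [← dist_eq_norm x (p z)]; gcongr
    _ ≤ (5 + 8 * C) * ε * r + η / 2 * r := by linarith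
    _ = η * r := by rw [hεη]; ring

/-- The affine functions attached to points `z ∉ F` near an isolated point `a` of `F` are
constantly `f a`. -/
lemma eq_of_notMem_derSet {E : Type*} [NormedAddCommGroup E] [NormedSpace ℝ E]
    {Y : Type*} [NormedAddCommGroup Y] [NormedSpace ℝ Y]
    {F : Set E} {f : E → Y} {p : E → E} {s : E → ℝ} {L : E → E →L[ℝ] Y}
    (hp : ∀ z, p z ∈ F ∧ infDist z F = dist z (p z))
    (hs : ∀ z, 0 ≤ s z ∧ s z ^ 4 = infDist z F)
    (hzero : ∀ z ∉ F, (F ∩ ball z (s z ^ 2)).Subsingleton → L z = 0)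
    {a : E} (ha : a ∈ F) (had : a ∉ derSet F) :
    ∃ ρ > 0, (∀ x ∈ F, dist x a < ρ → x = a) ∧
      ∀ x, dist x a < ρ → ∀ z ∉ F, dist x z < infDist z F / 2 →
        f (p z) + L z (x - p z) = f a := by
  obtain ⟨δ, hδ, hiso⟩ : ∃ δ > 0, ∀ x ∈ F, dist x a < δ → x = a := by
    have : ¬ ∀ ε > 0, ∃ b ∈ F \ {a}, dist a b < ε := fun h => had (Metric.mem_closure_iff.2 h)
    push Not at this
    obtain ⟨δ, hδ, h⟩ := this
    refine ⟨δ, hδ, fun x hx hxa => ?_⟩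
    by_contra hne
    have := h x ⟨hx, hne⟩
    rw [dist_comm] at this
    linarith
  refine ⟨min (δ / 5) ((δ / 2) ^ 2 / 2), by positivity, ?_, fun x hx z hz hxz => ?_⟩
  · intro x hx hxa
    have := hxa.trans_le (min_le_left _ _)
    exact hiso x hx (by linarith)
  obtain ⟨hx1, hx2⟩ := lt_min_iff.1 hx
  obtain ⟨hpF, hpd⟩ := hp z
  obtain ⟨hs0, hs4⟩ := hs z
  obtain ⟨hd, hxp, hpa, hza⟩ := whitney_distances ha hpd hxz
  have hs2 : s z ^ 2 < δ / 2 := by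
    refine lt_of_pow_lt_pow_left₀ 2 (by positivity) ?_
    have : (s z ^ 2) ^ 2 = s z ^ 4 := by ring
    rw [this, hs4]; linarith
  have key : ∀ u ∈ F ∩ ball z (s z ^ 2), u = a := fun u hu => by
    have := dist_triangle u z a
    have := mem_ball.1 hu.2
    exact hiso u hu.1 (by linarith)
  rw [hzero z hz (fun u hu v hv => (key u hu).trans (key v hv).symm),
    hiso _ hpF (by linarith)]
  simp

/-- Smooth functions on the complement of a closed set can be chosen with values in the convex
hulls of the values of a family of locally defined affine functions. -/
lemma exists_differentiable_blend {E : Type*} [NormedAddCommGroup E] [NormedSpace ℝ E]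
    [FiniteDimensional ℝ E] {Y : Type*} [NormedAddCommGroup Y] [NormedSpace ℝ Y]
    {F : Set E} (hF : IsClosed F) (hFne : F.Nonempty) (f : E → Y) (p : E → E)
    (L : E → E →L[ℝ] Y) :
    ∃ g : E → Y, (∀ x ∈ F, g x = f x) ∧ (∀ x ∉ F, DifferentiableAt ℝ g x) ∧
      ∀ x ∉ F, g x ∈ convexHull ℝ
        {c | ∃ z ∉ F, dist x z < infDist z F / 2 ∧ c = f (p z) + L z (x - p z)} := by
  classical
  let U : TopologicalSpace.Opens E := ⟨Fᶜ, hF.isOpen_compl⟩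
  have : ProperSpace E := FiniteDimensional.proper ℝ E
  have : LocallyCompactSpace U := hF.isOpen_compl.locallyCompactSpace
  obtain ⟨g, hg⟩ := exists_contMDiffMap_forall_mem_convex_of_local (n := (⊤ : ℕ∞))
    (modelWithCornersSelf ℝ E) (M := U)
    (t := fun x => convexHull ℝ
      {c | ∃ z ∉ F, dist (x : E) z < infDist z F / 2 ∧ c = f (p z) + L z ((x : E) - p z)})
    (fun x => convex_convexHull ℝ _) (fun z => by
      have hz : (z : E) ∉ F := z.2
      have hd : 0 < infDist (z : E) F := (hF.notMem_iff_infDist_pos hFne).1 hz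
      refine ⟨ball z (infDist (z : E) F / 2), ball_mem_nhds _ (by positivity),
        fun x => f (p z) + L z ((x : E) - p z), ?_, fun x hx => ?_⟩
      · have h : ContDiff ℝ (⊤ : ℕ∞) (fun x : E => f (p z) + L z (x - p z)) := by fun_prop
        exact (h.contMDiff.comp contMDiff_subtype_val).contMDiffOn
      · exact subset_convexHull ℝ _ ⟨z, hz, hx, rfl⟩)
  let G : E → Y := fun x => if h : x ∈ F then f x else g ⟨x, h⟩
  have hG : ∀ x (h : x ∉ F), G x = g ⟨x, h⟩ := fun x h => by simp [G, h]
  refine ⟨G, fun x hx => by simp [G, hx], fun x hx => ?_, fun x hx => ?_⟩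
  · have h1 : (fun y : U => G y) = g := funext fun y => hG y y.2
    have h2 := (contMDiffAt_subtype_iff (I := modelWithCornersSelf ℝ E)
      (I' := modelWithCornersSelf ℝ Y) (n := (⊤ : ℕ∞)) (f := G) (x := (⟨x, hx⟩ : U))).1
      (by rw [h1]; exact g.contMDiff _)
    exact (contMDiffAt_iff_contDiffAt.1 h2).differentiableAt (by simp)
  · rw [hG x hx]; exact hg ⟨x, hx⟩

/-- First-order estimates for points of `F` and for the locally defined affine functions give
differentiability of the blend at points of `F`. -/
lemma hasFDerivAt_of_blend {E : Type*} [NormedAddCommGroup E] [NormedSpace ℝ E]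
    {Y : Type*} [NormedAddCommGroup Y] [NormedSpace ℝ Y]
    {F : Set E} {f g : E → Y} {t : E → Set Y} (hgF : ∀ x ∈ F, g x = f x)
    (hgt : ∀ x ∉ F, g x ∈ convexHull ℝ (t x)) {a : E} (ha : a ∈ F) {T : E →L[ℝ] Y}
    (h1 : ∀ η > 0, ∃ ρ > 0, ∀ x ∈ F, dist x a < ρ → ‖f x - f a - T (x - a)‖ ≤ η * ‖x - a‖)
    (h2 : ∀ η > 0, ∃ ρ > 0, ∀ x, dist x a < ρ → ∀ c ∈ t x,
      ‖c - f a - T (x - a)‖ ≤ η * ‖x - a‖) :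
    HasFDerivAt g T a := by
  rw [hasFDerivAt_iff_isLittleO, Asymptotics.isLittleO_iff]
  intro η hη
  obtain ⟨ρ₁, hρ₁, h1⟩ := h1 η hη
  obtain ⟨ρ₂, hρ₂, h2⟩ := h2 η hη
  filter_upwards [ball_mem_nhds a hρ₁, ball_mem_nhds a hρ₂] with x hx1 hx2
  rw [hgF a ha]
  by_cases hx : x ∈ F
  · rw [hgF x hx]; exact h1 x hx hx1
  · have hsub : t x ⊆ closedBall (f a + T (x - a)) (η * ‖x - a‖) := fun c hc => by
      rw [mem_closedBall, dist_eq_norm, ← sub_sub]; exact h2 x hx2 c hc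
    have := convexHull_min hsub (convex_closedBall _ _) (hgt x hx)
    rwa [mem_closedBall, dist_eq_norm, ← sub_sub] at this

/-- If `F ⊆ ℝⁿ` is a nonempty closed set whose paratingent cone spans `ℝⁿ` at every
accumulation point of `F`, then every function `f : F → Y` that is relatively strictly
differentiable at every accumulation point of `F` admits an everywhere differentiable
extension to `ℝⁿ`. -/
theorem differentiable_extension_of_strictly_differentiable
    (n : ℕ) {Y : Type*} [NormedAddCommGroup Y] [NormedSpace ℝ Y]
    (F : Set (EuclideanSpace ℝ (Fin n))) (hF : IsClosed F) (hFne : F.Nonempty)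
    (hspan : ∀ x ∈ derSet F, Submodule.span ℝ (Ptg F x) = ⊤)
    (f : EuclideanSpace ℝ (Fin n) → Y)
    (hf : ∀ x ∈ derSet F, ∃ T : EuclideanSpace ℝ (Fin n) →L[ℝ] Y,
      RelStrictDerivAt f F T x) :
    ∃ fbar : EuclideanSpace ℝ (Fin n) → Y,
      (∀ x ∈ F, fbar x = f x) ∧ Differentiable ℝ fbar := by
  choose p hp using fun z => hF.exists_infDist_eq_dist hFne z
  -- `s z` is the fourth root of the distance to `F`.
  obtain ⟨s, hs⟩ : ∃ s : EuclideanSpace ℝ (Fin n) → ℝ, ∀ z, 0 ≤ s z ∧ s z ^ 4 = infDist z F := by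
    refine ⟨fun z => √√(infDist z F), fun z => ⟨by positivity, ?_⟩⟩
    have h : √√(infDist z F) ^ 4 = (√√(infDist z F) ^ 2) ^ 2 := by ring
    rw [h, Real.sq_sqrt (Real.sqrt_nonneg _), Real.sq_sqrt infDist_nonneg]
  choose! L hL hzero hbest using fun z (hz : z ∉ F) =>
    exists_almost_best f (F ∩ ball z (s z ^ 2)) (s z) (infDist z F)
      ((hF.notMem_iff_infDist_pos hFne).1 hz)
  obtain ⟨g, hgF, hgd, hgt⟩ := exists_differentiable_blend hF hFne f p L
  refine ⟨g, hgF, fun a => ?_⟩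
  by_cases ha : a ∈ F
  swap
  · exact hgd a ha
  by_cases had : a ∈ derSet F
  · obtain ⟨T, hT⟩ := hf a had
    refine (hasFDerivAt_of_blend hgF hgt ha (T := T) (fun η hη => ?_)
      (fun η hη => ?_)).differentiableAt
    · obtain ⟨δ, hδ, h⟩ := hT η hη
      exact ⟨δ, hδ, fun x hx hxa => h a ha x hx (by simpa using hδ) (by rwa [← dist_eq_norm])⟩
    · obtain ⟨ρ, hρ, h⟩ := estimate_of_mem_derSet hp hs hL hbest hF ha (hspan a had) hT hη
      refine ⟨ρ, hρ, fun x hx c hc => ?_⟩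
      obtain ⟨z, hz, hxz, rfl⟩ := hc
      exact h x hx z hz hxz
  · obtain ⟨ρ, hρ, h1, h2⟩ := eq_of_notMem_derSet (f := f) hp hs hzero ha had
    refine (hasFDerivAt_of_blend hgF hgt ha (T := 0) (fun η hη => ?_)
      (fun η hη => ?_)).differentiableAt
    · exact ⟨ρ, hρ, fun x hx hxa => by simp [h1 x hx hxa]⟩
    · refine ⟨ρ, hρ, fun x hx c hc => ?_⟩
      obtain ⟨z, hz, hxz, rfl⟩ := hc
      rw [h2 x hx z hz hxz]
      simpa using by positivity
end

section
/- Let n ∈ ℕ and let F ⊆ ℝⁿ be a nonempty closed set such that the paratingent cone Ptg(F,x) spans ℝⁿ for every accumulation point x of F. Let Y be a normed linear space and let L : F → L(ℝⁿ,Y) be a relative strict derivative of a function f : F → Y on F (i.e., L(a) is a relative strict derivative of f at a with respect to F for every a ∈ F). Then L is Baire one on F. -/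
/-!
For each scale `r > 0` a continuous map `g : F → L(ℝⁿ, Y)` is selected, and `g → L` pointwise as
`r → 0`. The selection uses a partition of unity, so it suffices to find, near every `x ∈ F`, a
constant operator admissible at all points `y ∈ F` close to `x`, where admissibility at `y`
(`Admissible`) is a convex condition.

If `x` is isolated in `F`, the constant is `L x`. Otherwise the spanning paratingent cone provides
`n` pairs of points of `F` near `x` whose rescaled differences form a basis, with control `m` on the
norms of the basis and of its inverse (`IsFrame`). The operator `A` interpolating `f` on these pairs
satisfies `‖A - L y‖ ≤ m² ε` as soon as `L y` approximates `f` up to `ε` on pairs near `y`.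

The difficulty is that the best `m` varies discontinuously with the point, so that a frame found
close to one point may be far worse than those available at its neighbours. Comparing scales settles
this: the constant near `x` comes from the best frame in the ball of
radius `2r` about `x`. For `y` within `r` of `x`, this ball contains the ball of radius `r` about
`y` and lies inside the one of radius `3r` about `y`. Hence the frame is at least as good as any
frame at scale `r` about `y`, and its points are still near `y`. At an accumulation point `y`, a
single `m` is achieved at all scales (`exists_frame_of_span`), which gives convergence.
-/

open Filter Metric Set Topology

section Frames

variable {E : Type*} [NormedAddCommGroup E] [NormedSpace ℝ E]
  {Y : Type*} [NormedAddCommGroup Y] [NormedSpace ℝ Y]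

/-- The pairs `(p i, q i)` of points of `F` lie in the ball of radius `r` about `y`, and the
rescaled differences `α i • (q i - p i)` form a basis of `E` with quality bound `m`: the bound
controls both their norms and the `ℓ¹` norm of coordinates. Linear independence follows from the
second condition, and `finrank ℝ E` is the number of vectors. -/
def IsFrame (F : Set E) (r : ℝ) (y : E) (m : ℕ)
    (p q : Fin (Module.finrank ℝ E) → E) (α : Fin (Module.finrank ℝ E) → ℝ) : Prop :=
  (∀ i, p i ∈ F ∧ q i ∈ F ∧ dist (p i) y < r ∧ dist (q i) y < r ∧
    ‖α i • (q i - p i)‖ ≤ m) ∧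
  ∀ c : Fin (Module.finrank ℝ E) → ℝ,
    ∑ i, |c i| ≤ m * ‖∑ i, c i • (α i • (q i - p i))‖

/-- `T` approximates the increments of `f` up to the relative error `ε` on pairs of points of `F`
at distance less than `r` from `y`. -/
def ApproxOn (f : E → Y) (F : Set E) (T : E →L[ℝ] Y) (y : E) (r ε : ℝ) : Prop :=
  ∀ p ∈ F, ∀ q ∈ F, dist p y < r → dist q y < r → ‖f q - f p - T (q - p)‖ ≤ ε * ‖q - p‖

/-- The operators allowed as values at `y` of the scale-`r` continuous approximation of `L`. The
first condition forces the value `L y` at points isolated at scale `r`. The second one bounds the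
distance to `L y` in terms of the frames at scale `r` and of the quality of approximation of `f` by
`L y` at the larger scale `3 * r`. -/
def Admissible (f : E → Y) (F : Set E) (L : E → E →L[ℝ] Y) (r : ℝ) (y : E) :
    Set (E →L[ℝ] Y) :=
  {A | (F ∩ ball y r ⊆ {y} → A = L y) ∧
    ∀ m : ℕ, (∃ p q α, IsFrame F r y m p q α) →
      ∀ ε : ℝ, 0 < ε → ApproxOn f F (L y) y (3 * r) ε → ‖A - L y‖ ≤ m * m * ε}

theorem convex_admissible (f : E → Y) (F : Set E) (L : E → E →L[ℝ] Y) (r : ℝ) (y : E) :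
    Convex ℝ (Admissible f F L r y) := by
  intro A hA B hB a b ha hb hab
  refine ⟨fun h => ?_, fun m hm ε hε happ => ?_⟩
  · rw [hA.1 h, hB.1 h, ← add_smul, hab, one_smul]
  · have h1 := hA.2 m hm ε hε happ
    have h2 := hB.2 m hm ε hε happ
    rw [← dist_eq_norm, ← mem_closedBall] at h1 h2 ⊢
    exact convex_closedBall _ _ h1 h2 ha hb hab

theorem self_mem_admissible (f : E → Y) (F : Set E) (L : E → E →L[ℝ] Y) (r : ℝ) (y : E) :
    L y ∈ Admissible f F L r y := by
  refine ⟨fun _ => rfl, fun m _ ε hε _ => ?_⟩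
  rw [sub_self, norm_zero]
  positivity

theorem IsFrame.mono {F : Set E} {r r' : ℝ} {y y' : E} {m : ℕ}
    {p q : Fin (Module.finrank ℝ E) → E} {α : Fin (Module.finrank ℝ E) → ℝ}
    (h : IsFrame F r y m p q α) (hr : dist y y' + r ≤ r') : IsFrame F r' y' m p q α := by
  refine ⟨fun i => ?_, h.2⟩
  obtain ⟨h1, h2, h3, h4, h5⟩ := h.1 i
  have := dist_triangle (p i) y y'
  have := dist_triangle (q i) y y'
  exact ⟨h1, h2, by linarith, by linarith, h5⟩

variable [FiniteDimensional ℝ E]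

/-- The operator interpolating `f` on the pairs of a frame is the same for all base points, and is
close to every operator that approximates `f` on a ball containing the frame. -/
theorem IsFrame.exists_interpolant (f : E → Y) {F : Set E} {r : ℝ} {x : E} {m : ℕ}
    {p q : Fin (Module.finrank ℝ E) → E} {α : Fin (Module.finrank ℝ E) → ℝ}
    (h : IsFrame F r x m p q α) :
    ∃ A : E →L[ℝ] Y, ∀ (T : E →L[ℝ] Y) (y : E) (ρ ε : ℝ), 0 < ε → dist x y + r ≤ ρ →
      ApproxOn f F T y ρ ε → ‖A - T‖ ≤ m * m * ε := by
  have hli : LinearIndependent ℝ (fun i => α i • (q i - p i)) := by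
    rw [Fintype.linearIndependent_iff]
    intro c hc i
    have h0 := h.2 c
    rw [hc, norm_zero, mul_zero] at h0
    have h1 := Finset.single_le_sum (f := fun i => |c i|) (fun i _ => abs_nonneg _)
      (Finset.mem_univ i)
    exact abs_eq_zero.1 (le_antisymm (h1.trans h0) (abs_nonneg _))
  let b := Module.Basis.mk hli (hli.span_eq_top_of_card_eq_finrank' (by simp)).ge
  have hb : ∀ i, b i = α i • (q i - p i) := fun i => by simp [b]
  let A : E →L[ℝ] Y := LinearMap.toContinuousLinearMap
    (b.constr ℝ fun i => α i • (f (q i) - f (p i)))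
  have hA : ∀ i, A (b i) = α i • (f (q i) - f (p i)) := fun i => by simp [A]
  refine ⟨A, fun T y ρ ε hε hρ happ => ?_⟩
  have hvec : ∀ i, ‖(A - T) (b i)‖ ≤ m * ε := by
    intro i
    obtain ⟨h1, h2, -, -, h5⟩ := h.1 i
    obtain ⟨-, -, h3, h4, -⟩ := (h.mono hρ).1 i
    have e : (A - T) (b i) = α i • (f (q i) - f (p i) - T (q i - p i)) := by
      rw [sub_apply, hA, hb, map_smul, ← smul_sub]
    rw [e, norm_smul]
    rw [norm_smul] at h5
    calc ‖α i‖ * ‖f (q i) - f (p i) - T (q i - p i)‖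
        ≤ ‖α i‖ * (ε * ‖q i - p i‖) := by
          gcongr
          exact happ _ h1 _ h2 h3 h4
      _ = (‖α i‖ * ‖q i - p i‖) * ε := by ring
      _ ≤ m * ε := by gcongr
  refine ContinuousLinearMap.opNorm_le_bound _ (by positivity) fun z => ?_
  have hz := b.sum_repr z
  have hc := h.2 (b.repr z)
  simp only [← hb, hz] at hc
  calc ‖(A - T) z‖ = ‖∑ i, b.repr z i • (A - T) (b i)‖ := by
        conv_lhs => rw [← hz]
        simp only [map_sum, map_smul]
    _ ≤ ∑ i, |b.repr z i| * (m * ε) := by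
        refine norm_sum_le_of_le _ fun i _ => ?_
        rw [norm_smul, Real.norm_eq_abs]
        gcongr
        exact hvec i
    _ = (∑ i, |b.repr z i|) * (m * ε) := by rw [Finset.sum_mul]
    _ ≤ (m * ‖z‖) * (m * ε) := by gcongr
    _ = m * m * ε * ‖z‖ := by ring

/-- Where the paratingent cone spans, frames with one and the same quality bound exist at every
scale: a basis contained in the cone is a limit of rescaled differences, and the quality of a basis
is stable under small perturbations. -/
theorem exists_frame_of_span {F : Set E} {x : E} (h : Submodule.span ℝ (Ptg F x) = ⊤) :
    ∃ m : ℕ, ∀ r : ℝ, 0 < r → ∃ p q α, IsFrame F r x m p q α := by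
  have hex : ∃ v : Fin (Module.finrank ℝ E) → E, (∀ i, v i ∈ Ptg F x) ∧
      LinearIndependent ℝ v := by
    have h1 := Submodule.exists_fun_fin_finrank_span_eq ℝ (Ptg F x)
    rw [h, finrank_top] at h1
    obtain ⟨v, hv, -, hli⟩ := h1
    exact ⟨v, hv, hli⟩
  obtain ⟨v, hv, hli⟩ := hex
  let b := Module.Basis.mk hli (hli.span_eq_top_of_card_eq_finrank' (by simp)).ge
  have hb : ∀ i, b i = v i := fun i => by simp [b]
  -- `K` bounds the `ℓ¹` norm of the coordinates with respect to `v`, and `R` bounds `v`.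
  let K : ℝ := 1 + ∑ i, ‖LinearMap.toContinuousLinearMap (b.coord i)‖
  let R : ℝ := ∑ i, ‖v i‖
  have hK1 : 1 ≤ K := le_add_of_nonneg_right (Finset.sum_nonneg fun i _ => norm_nonneg _)
  have hK : ∀ c : Fin (Module.finrank ℝ E) → ℝ, ∑ i, |c i| ≤ K * ‖∑ i, c i • v i‖ := by
    intro c
    set z := ∑ i, c i • v i with hz
    have hcz : ∀ i, c i = LinearMap.toContinuousLinearMap (b.coord i) z := by
      intro i
      simp only [hz, ← hb]
      simp [Module.Basis.repr_self, Finsupp.single_apply]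
    calc ∑ i, |c i| ≤ ∑ i, ‖LinearMap.toContinuousLinearMap (b.coord i)‖ * ‖z‖ := by
          refine Finset.sum_le_sum fun i _ => ?_
          conv_lhs => rw [hcz i]
          rw [← Real.norm_eq_abs]
          exact ContinuousLinearMap.le_opNorm _ z
      _ = (∑ i, ‖LinearMap.toContinuousLinearMap (b.coord i)‖) * ‖z‖ := by rw [Finset.sum_mul]
      _ ≤ K * ‖z‖ := by
          gcongr
          exact le_add_of_nonneg_left zero_le_one
  have hR : ∀ i, ‖v i‖ ≤ R := fun i =>
    Finset.single_le_sum (f := fun i => ‖v i‖) (fun i _ => norm_nonneg _) (Finset.mem_univ i)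
  obtain ⟨m, hm⟩ := exists_nat_ge (max (2 * K) (R + 1))
  have hm1 : 2 * K ≤ m := (le_max_left _ _).trans hm
  have hm2 : R + 1 ≤ m := (le_max_right _ _).trans hm
  refine ⟨m, fun r hr => ?_⟩
  have hη : 0 < 1 / (2 * K) := by positivity
  have hη1 : 1 / (2 * K) ≤ 1 := by
    rw [div_le_one (by positivity)]
    linarith
  have hpairs : ∀ i, ∃ p q : E, ∃ α : ℝ, p ∈ F ∧ q ∈ F ∧ dist p x < r ∧ dist q x < r ∧
      ‖α • (q - p) - v i‖ < 1 / (2 * K) := by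
    intro i
    obtain ⟨xk, yk, αk, hxF, hyF, hx, hy, hlim⟩ := hv i
    have e1 := (Metric.tendsto_nhds.1 hx) r hr
    have e2 := (Metric.tendsto_nhds.1 hy) r hr
    have e3 := (Metric.tendsto_nhds.1 hlim) _ hη
    obtain ⟨k, k1, k2, k3⟩ := (e1.and (e2.and e3)).exists
    exact ⟨xk k, yk k, αk k, hxF k, hyF k, k1, k2, by rwa [← dist_eq_norm]⟩
  choose p q α hp hq hpr hqr hclose using hpairs
  refine ⟨p, q, α, fun i => ⟨hp i, hq i, hpr i, hqr i, ?_⟩, fun c => ?_⟩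
  · have h1 := norm_le_norm_add_norm_sub' (α i • (q i - p i)) (v i)
    linarith [hR i, hclose i]
  · have hdiff : ‖∑ i, c i • v i‖ ≤ ‖∑ i, c i • (α i • (q i - p i))‖
        + (∑ i, |c i|) * (1 / (2 * K)) := by
      have h1 := norm_le_norm_add_norm_sub (∑ i, c i • (α i • (q i - p i))) (∑ i, c i • v i)
      refine h1.trans (add_le_add le_rfl ?_)
      rw [← Finset.sum_sub_distrib, Finset.sum_mul]
      refine norm_sum_le_of_le _ fun i _ => ?_
      rw [← smul_sub, norm_smul, Real.norm_eq_abs]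
      gcongr
      exact (hclose i).le
    -- Half of `∑ |c i|` is absorbed by the perturbation, at the cost of doubling `K`.
    have h2 : ∑ i, |c i| ≤ K * ‖∑ i, c i • (α i • (q i - p i))‖ + (∑ i, |c i|) / 2 := by
      calc ∑ i, |c i| ≤ K * ‖∑ i, c i • v i‖ := hK c
        _ ≤ K * (‖∑ i, c i • (α i • (q i - p i))‖ + (∑ i, |c i|) * (1 / (2 * K))) := by gcongr
        _ = _ := by field_simp
    calc ∑ i, |c i| ≤ 2 * K * ‖∑ i, c i • (α i • (q i - p i))‖ := by linarith
      _ ≤ m * ‖∑ i, c i • (α i • (q i - p i))‖ := by gcongr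

end Frames

theorem exists_isolating_ball {E : Type*} [NormedAddCommGroup E] {F : Set E} {x : E}
    (hx : x ∉ derSet F) : ∃ ρ > 0, F ∩ ball x ρ ⊆ {x} := by
  simp only [derSet, mem_ofPred_eq, Metric.mem_closure_iff, not_forall, not_exists, not_and,
    not_lt] at hx
  obtain ⟨ρ, hρ, h⟩ := hx
  refine ⟨ρ, hρ, fun y hy => ?_⟩
  by_contra hne
  have h1 := h y ⟨hy.1, hne⟩
  have h2 := mem_ball'.1 hy.2
  linarith

/-- The local existence of a constant admissible operator, which is what the partition of unity
requires. -/
theorem exists_admissible_nhds {E : Type*} [NormedAddCommGroup E] [NormedSpace ℝ E]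
    [FiniteDimensional ℝ E] {Y : Type*} [NormedAddCommGroup Y] [NormedSpace ℝ Y]
    (f : E → Y) {F : Set E} (L : E → E →L[ℝ] Y)
    (hspan : ∀ x ∈ derSet F, Submodule.span ℝ (Ptg F x) = ⊤) {r : ℝ} (hr : 0 < r)
    {x : E} (hxF : x ∈ F) :
    ∃ A, ∃ ρ > 0, ∀ y ∈ F, dist y x < ρ → A ∈ Admissible f F L r y := by
  classical
  by_cases hx : x ∈ derSet F
  · obtain ⟨m₀, hm₀⟩ := exists_frame_of_span (hspan x hx)
    have hex : ∃ m : ℕ, ∃ p q α, IsFrame F (2 * r) x m p q α := ⟨m₀, hm₀ _ (by positivity)⟩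
    -- The least quality bound at scale `2 * r` about `x` is the best one available.
    obtain ⟨p, q, α, hfr⟩ := Nat.find_spec hex
    obtain ⟨A, hA⟩ := hfr.exists_interpolant f
    by_cases hxr : F ∩ ball x r ⊆ {x}
    · -- Impossible, but the constant `L x` serves just as well.
      refine ⟨L x, r, hr, fun y hy hyx => ?_⟩
      have : y = x := hxr ⟨hy, hyx⟩
      rw [this]
      exact self_mem_admissible f F L r x
    · refine ⟨A, r, hr, fun y hy hyx => ⟨fun hiso => ?_, fun m hm ε hε happ => ?_⟩⟩
      · have hxy : x = y := hiso ⟨hxF, mem_ball'.2 hyx⟩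
        exact absurd (hxy ▸ hiso) hxr
      · have hle : Nat.find hex ≤ m := by
          obtain ⟨p', q', α', h'⟩ := hm
          exact Nat.find_min' hex ⟨p', q', α', h'.mono (by linarith)⟩
        have hle' : (Nat.find hex : ℝ) ≤ m := by exact_mod_cast hle
        calc ‖A - L y‖ ≤ Nat.find hex * Nat.find hex * ε :=
              hA (L y) y (3 * r) ε hε (by rw [dist_comm]; linarith) happ
          _ ≤ m * m * ε := by gcongr
  · obtain ⟨ρ, hρ, h⟩ := exists_isolating_ball hx
    refine ⟨L x, ρ, hρ, fun y hy hyx => ?_⟩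
    have : y = x := h ⟨hy, hyx⟩
    rw [this]
    exact self_mem_admissible f F L r x

/-- If `F ⊆ ℝⁿ` is a nonempty closed set whose paratingent cone spans `ℝⁿ` at every
accumulation point of `F`, then every relative strict derivative `L` of a function
`f : F → Y` on `F` is Baire one on `F`. -/
theorem strict_deriv_baire_one_of_paratingent_spans
    (n : ℕ) {Y : Type*} [NormedAddCommGroup Y] [NormedSpace ℝ Y]
    (F : Set (EuclideanSpace ℝ (Fin n))) (hF : IsClosed F) (hFne : F.Nonempty)
    (hspan : ∀ x ∈ derSet F, Submodule.span ℝ (Ptg F x) = ⊤)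
    (f : EuclideanSpace ℝ (Fin n) → Y)
    (L : EuclideanSpace ℝ (Fin n) → (EuclideanSpace ℝ (Fin n) →L[ℝ] Y))
    (hL : ∀ a ∈ F, RelStrictDerivAt f F (L a) a) :
    BaireOneOn L F := by
  classical
  have hsel : ∀ k : ℕ, ∃ g : C(F, EuclideanSpace ℝ (Fin n) →L[ℝ] Y),
      ∀ x : F, g x ∈ Admissible f F L (1 / ((k : ℝ) + 1)) x := by
    intro k
    refine exists_continuous_forall_mem_convex_of_local_const
      (fun x : F => convex_admissible f F L _ (x : EuclideanSpace ℝ (Fin n))) fun x => ?_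
    obtain ⟨A, ρ, hρ, hA⟩ := exists_admissible_nhds f L hspan
      (r := 1 / ((k : ℝ) + 1)) (by positivity) x.2
    exact ⟨A, Filter.mem_of_superset (Metric.ball_mem_nhds x hρ) fun y hy => hA y y.2 hy⟩
  choose g hg using hsel
  have hr0 : Tendsto (fun k : ℕ => 1 / ((k : ℝ) + 1)) atTop (𝓝 0) :=
    tendsto_one_div_add_atTop_nhds_zero_nat
  refine ⟨fun k x => if hx : x ∈ F then g k ⟨x, hx⟩ else 0, fun k => ?_, fun x hx => ?_⟩
  · rw [continuousOn_iff_continuous_domRestrict]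
    convert (g k).continuous using 1
    ext1 x
    simp
  · simp only [hx, dif_pos]
    by_cases hd : x ∈ derSet F
    · obtain ⟨m, hm⟩ := exists_frame_of_span (hspan x hd)
      rw [Metric.tendsto_nhds]
      intro η hη
      have hε : 0 < η / (m * m + 1) := by positivity
      obtain ⟨δ, hδ, happ⟩ := hL x hx _ hε
      filter_upwards [hr0.eventually_lt_const (show 0 < δ / 3 by positivity)] with k hk
      have h1 := (hg k ⟨x, hx⟩).2 m (hm _ (by positivity)) _ hε
        (fun p hp q hq hpx hqx => happ p hp q hq
          (by rw [← dist_eq_norm]; linarith) (by rw [← dist_eq_norm]; linarith))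
      rw [dist_eq_norm]
      refine h1.trans_lt ?_
      rw [← mul_div_assoc, div_lt_iff₀ (by positivity)]
      linarith
    · obtain ⟨ρ, hρ, hiso⟩ := exists_isolating_ball hd
      refine tendsto_const_nhds.congr' ?_
      filter_upwards [hr0.eventually_lt_const hρ] with k hk
      exact ((hg k ⟨x, hx⟩).1 fun y hy =>
        hiso ⟨hy.1, ball_subset_ball hk.le hy.2⟩).symm
end
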